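/- arXiv:1104.5007 — 3 statements merged into one kernel-verified Lean document; each statement's English description precedes it below -/
import Mathlib

section
/- For every fixed integer k ≥ 4, with t := ⌊(k−2)/2⌋, there exists a constant C_k such that for every integer n ≥ 1 there is a family of n-permutations of size at least 2^{n·((1/t!)·α(n)^t − C_k·α(n)^{t−1})} whose VC-dimension is at most k; in other words, r_k(n) ≥ 2^{n·((1/t!)·α(n)^t − C_k·α(n)^{t−1})}. -/
/-! ## Inverse Ackermann hierarchy -/

/-- Bounded-fuel iteration counter: number of applications of `f` needed to bring `m`
down to a value `≤ 1` (assuming `f` strictly decreases on values `≥ 2`). -/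
def iterCount (f : ℕ → ℕ) : ℕ → ℕ → ℕ
  | 0, _ => 0
  | fuel + 1, m => if m ≤ 1 then 0 else 1 + iterCount f fuel (f m)

/-- The inverse Ackermann hierarchy: `alphaHier 1 m = ⌈m/2⌉`, `alphaHier d 1 = 0` for `d ≥ 2`,
and `alphaHier d m = 1 + alphaHier d (alphaHier (d-1) m)` for `m, d ≥ 2`. -/
def alphaHier : ℕ → ℕ → ℕ
  | 0, m => m
  | 1, m => (m + 1) / 2
  | d + 2, m => iterCount (alphaHier (d + 1)) m m

/-- The inverse Ackermann function `α(m) = min {k ≥ 1 : α_k(m) ≤ 3}`. -/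
noncomputable def invAck (m : ℕ) : ℕ := sInf {k : ℕ | 1 ≤ k ∧ alphaHier k m ≤ 3}

/-! ## Permutations, restrictions, VC-dimension -/

/-- The restriction of the `n`-permutation `π` to the (increasing) `k`-tuple of positions `a`
is the `k`-permutation `σ`. -/
def PermRestrictionIs {n k : ℕ} (π : Equiv.Perm (Fin n)) (a : Fin k → Fin n)
    (σ : Equiv.Perm (Fin k)) : Prop :=
  ∀ i j : Fin k, σ i < σ j ↔ π (a i) < π (a j)

/-- The `k`-tuple of positions `a` is shattered by the family `P` of `n`-permutations. -/
def Shatters {n k : ℕ} (P : Finset (Equiv.Perm (Fin n))) (a : Fin k → Fin n) : Prop :=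
  StrictMono a ∧ ∀ σ : Equiv.Perm (Fin k), ∃ π ∈ P, PermRestrictionIs π a σ

/-- The family `P` of `n`-permutations has VC-dimension at most `k`:
no `(k+1)`-tuple of positions is shattered by `P`. -/
def VCDimLE (n k : ℕ) (P : Finset (Equiv.Perm (Fin n))) : Prop :=
  ∀ a : Fin (k + 1) → Fin n, ¬ Shatters P a

/-- The number of `1`-entries of the union of the permutation matrices of a family `P`
of `n`-permutations. -/
noncomputable def permOnes {n : ℕ} (P : Finset (Equiv.Perm (Fin n))) : ℕ :=
  Nat.card {p : Fin n × Fin n // ∃ π ∈ P, π p.2 = p.1}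

/-- `v(P) = |M_P| / n`, the average number of `1`-entries per column of the union
of the permutation matrices of the family `P`. -/
noncomputable def vPerm {n : ℕ} (P : Finset (Equiv.Perm (Fin n))) : ℝ :=
  (permOnes P : ℝ) / (n : ℝ)

/-! ## (0,1)-matrices -/

/-- The number of `1`-entries of a `(0,1)`-matrix (represented as a `Bool` matrix). -/
noncomputable def matOnes {m n : ℕ} (M : Fin m → Fin n → Bool) : ℕ :=
  Nat.card {p : Fin m × Fin n // M p.1 p.2 = true}

/-- The number of `1`-entries in column `j` of a `(0,1)`-matrix. -/
noncomputable def colOnes {m n : ℕ} (M : Fin m → Fin n → Bool) (j : Fin n) : ℕ :=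
  Nat.card {i : Fin m // M i j = true}

/-- The matrix `B` contains the matrix `S`. -/
def MatContains {m n p q : ℕ} (B : Fin m → Fin n → Bool) (S : Fin p → Fin q → Bool) : Prop :=
  ∃ (r : Fin p → Fin m) (c : Fin q → Fin n), StrictMono r ∧ StrictMono c ∧
    ∀ a b, S a b = true → B (r a) (c b) = true

/-- The `s × 2` matrix `DS_s`, with a `1`-entry in (1-indexed) row `i` and column `j`
exactly when `i + j` is odd. -/
def DS (s : ℕ) : Fin s → Fin 2 → Bool :=
  fun i j => decide ((i.val + j.val) % 2 = 1)

/-- The maximum number of `1`-entries in an `n × n` matrix avoiding `S`. -/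
noncomputable def exMat {p q : ℕ} (S : Fin p → Fin q → Bool) (n : ℕ) : ℕ :=
  sSup {x : ℕ | ∃ M : Fin n → Fin n → Bool, ¬ MatContains M S ∧ matOnes M = x}

/-- An `n × n` matrix is `k`-full if some increasing `k`-tuple of columns contains
every `k`-permutation matrix. -/
def IsFull (k : ℕ) {n : ℕ} (M : Fin n → Fin n → Bool) : Prop :=
  ∃ c : Fin k → Fin n, StrictMono c ∧ ∀ σ : Equiv.Perm (Fin k),
    ∃ r : Fin k → Fin n, StrictMono r ∧ ∀ b : Fin k, M (r (σ b)) (c b) = true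

/-- `pFull k n` is the maximum number of `1`-entries in an `n × n` matrix that is
not `(k+1)`-full. -/
noncomputable def pFull (k n : ℕ) : ℕ :=
  sSup {x : ℕ | ∃ M : Fin n → Fin n → Bool, ¬ IsFull (k + 1) M ∧ matOnes M = x}

/-! ## Formations -/

/-- `M` contains a `B`-fat `(r,s)`-formation: there are an `s`-partition of the rows into
intervals (the fibers of a monotone map `g`) and `r` columns, each having at least `B`
`1`-entries in every interval. -/
def FatFormation (B r s : ℕ) {m n : ℕ} (M : Fin m → Fin n → Bool) : Prop :=
  ∃ g : Fin m → Fin s, Monotone g ∧ ∃ c : Fin r → Fin n, StrictMono c ∧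
    ∀ (j : Fin r) (i : Fin s), B ≤ Nat.card {x : Fin m // g x = i ∧ M x (c j) = true}

/-- `M` contains a doubled `(r,s)`-formation: there are an `s`-partition of the rows into
intervals and `r` columns, each having at least one `1`-entry in the first and last
interval and at least two `1`-entries in every other interval. -/
def DoubledFormation (r s : ℕ) {m n : ℕ} (M : Fin m → Fin n → Bool) : Prop :=
  ∃ g : Fin m → Fin s, Monotone g ∧ ∃ c : Fin r → Fin n, StrictMono c ∧
    ∀ (j : Fin r) (i : Fin s),
      1 ≤ Nat.card {x : Fin m // g x = i ∧ M x (c j) = true} ∧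
      (i.val ≠ 0 → i.val ≠ s - 1 → 2 ≤ Nat.card {x : Fin m // g x = i ∧ M x (c j) = true})

/-! ## The functions R, D, β -/

/-- Nivasch's hierarchy `R_s(d)` (shifted as in the paper). -/
def Rfun : ℕ → ℕ → ℕ
  | 0, _ => 0
  | 1, _ => 0
  | 2, _ => 2
  | 3, _ => 3
  | 4, d => 2 * d + 1
  | _ + 5, 0 => 0
  | _ + 5, 1 => 0
  | s + 5, 2 => 2 ^ (s + 3) + 1
  | s + 5, d + 3 =>
      2 * (Rfun (s + 4) (d + 3) - 1) + (Rfun (s + 3) (d + 3) - 1) * (Rfun (s + 5) (d + 2) - 3) + 1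
  termination_by s d => (s, d)

/-- The hierarchy `D_s(d)`. -/
def Dfun : ℕ → ℕ → ℕ
  | 0, _ => 0
  | 1, _ => 0
  | 2, _ => 2
  | _ + 3, 0 => 0
  | _ + 3, 1 => 0
  | s + 3, 2 => 2 ^ (s + 2) + 2 ^ (s + 1) - 1
  | s + 3, d + 3 =>
      2 * Dfun (s + 2) (d + 3) + (Dfun (s + 1) (d + 3) + 1) * (Rfun (s + 3) (d + 2) - 3)
        + Dfun (s + 3) (d + 2) - Rfun (s + 3) (d + 2) + 1
  termination_by s d => (s, d)

/-- `β_s(m) = D_s(α(m))`. -/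
noncomputable def betaFun (s m : ℕ) : ℕ := Dfun s (invAck m)

/-! ## Sequences: MST and formations in sequences -/

/-- The list of column indices of the `1`-entries of a row, in increasing order. -/
def rowList {n : ℕ} (row : Fin n → Bool) : List (Fin n) :=
  (List.finRange n).filter (fun j => row j)

/-- The matrix → sequence transformation: read the rows top to bottom, writing for each
`1`-entry the index of its column. -/
def MST {m n : ℕ} (M : Fin m → Fin n → Bool) : List (Fin n) :=
  ((List.finRange m).map (fun i => rowList (M i))).flatten

/-- The list `L` contains an `(r,s)`-formation as a subsequence: a concatenation of `s`
permutations of the same `r`-element set of symbols is a sublist of `L`. -/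
def IsFormationSeq {A : Type*} [DecidableEq A] (r s : ℕ) (L : List A) : Prop :=
  ∃ (T : Finset A) (F : List (List A)), T.card = r ∧ F.length = s ∧
    (∀ l ∈ F, l.Nodup ∧ l.toFinset = T) ∧ List.Sublist F.flatten L

/- Nivasch's lower bounds for Davenport–Schinzel sequences, turned into families of permutations.

Fix a word cut into blocks of distinct letters, and choose one occurrence of each letter. The order
of the chosen occurrences is a permutation of the letters. If the permutations so obtained shatter
`k + 1` letters, then all orders of these letters are subsequences of the word, which forces an
alternation `a b a b …` of length `k + 2`. A word of order `k` in the sense of Davenport and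
Schinzel has no such alternation. A choice is recovered from its permutation and the weakly
increasing sequence of the blocks that contain the chosen occurrences, and there are only
exponentially many such sequences. So if `n` letters occur `μ` times each in `O(n)` blocks, there
are `μ ^ n / 2 ^ O(n)` permutations.

The words come from an Ackermann-type recursion. Each block of a word of order `s + 2` is expanded
into a word of order `s` over the letters of that block, and the letters of disjoint copies of a
third word are used to lengthen the blocks of the result. The multiplicities of the words of order
`s + 2` and `s` multiply in this step, so with multiplicity `2 ^ e d t` at order `2 * t + 2` and a
size bounded by row `d + O(1)` of the Ackermann function, the exponents obey Pascal's rule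
`e (d + 1) (t + 1) = e d (t + 1) + e (d + 1) t`. Hence `e d t` is `multichoose d t`, which is about
`d ^ t / t!`. -/

section Alternation

variable {α β L : Type*} [LinearOrder α] [LinearOrder β]

/-- A certificate that the word `w` contains no alternation `a b a b …` of length `s + 2` starting
with `a`: a weakly increasing height with values at most `s` on the occurrences of the two letters,
even at `a` and odd at `b`, so that it strictly increases along every alternation. -/
structure IsHeight (w : α → L) (s : ℕ) (a b : L) (h : α → ℕ) : Prop where
  even : ∀ p, w p = a → Even (h p)
  odd : ∀ p, w p = b → Odd (h p)
  le : ∀ p, w p = a ∨ w p = b → h p ≤ s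
  monotoneOn : MonotoneOn h {p | w p = a ∨ w p = b}

/-- Every alternation `a b a b …` in `w` starting with `a` has length at most `s + 1`, every
alternation `b a b a …` starting with `b` has length at most `s`. -/
def AltLE (w : α → L) (s : ℕ) (a b : L) : Prop :=
  ∃ h, IsHeight w s a b h

/-- Davenport–Schinzel words of order `s`. Unlike in the usual definition, equal letters may be
adjacent. -/
def IsDavenportSchinzel (s : ℕ) (w : α → L) : Prop :=
  ∀ a b, a ≠ b → AltLE w s a b ∨ AltLE w s b a

namespace AltLE

variable {w : α → L} {s s' : ℕ} {a b : L}

theorem mono (hw : AltLE w s a b) (hs : s ≤ s') : AltLE w s' a b := by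
  obtain ⟨h, hh⟩ := hw
  exact ⟨h, hh.even, hh.odd, fun p hp => (hh.le p hp).trans hs, hh.monotoneOn⟩

theorem comap {L' : Type*} {v : β → L'} {a' b' : L'} (hv : AltLE v s a' b') (φ : α → β)
    (hφ : MonotoneOn φ {p | w p = a ∨ w p = b}) (ha : ∀ p, w p = a → v (φ p) = a')
    (hb : ∀ p, w p = b → v (φ p) = b') : AltLE w s a b := by
  obtain ⟨h, hh⟩ := hv
  have hab : ∀ p, w p = a ∨ w p = b → v (φ p) = a' ∨ v (φ p) = b' :=
    fun p hp => hp.imp (ha p) (hb p)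
  exact ⟨h ∘ φ, fun p hp => hh.even _ (ha p hp), fun p hp => hh.odd _ (hb p hp),
    fun p hp => hh.le _ (hab p hp),
    fun p hp q hq hpq => hh.monotoneOn (hab p hp) (hab q hq) (hφ hp hq hpq)⟩

theorem of_comp {φ : β → α} (hφ : StrictMono φ) (hw : AltLE (w ∘ φ) s a b)
    (hrange : ∀ p, w p = a ∨ w p = b → p ∈ Set.range φ) : AltLE w s a b := by
  obtain ⟨h, hh⟩ := hw
  refine ⟨Function.extend φ h 0, fun p hp => ?_, fun p hp => ?_, fun p hp => ?_,
    fun p hp q hq hpq => ?_⟩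
  · obtain ⟨p, rfl⟩ := hrange p (.inl hp)
    rw [hφ.injective.extend_apply]
    exact hh.even p hp
  · obtain ⟨p, rfl⟩ := hrange p (.inr hp)
    rw [hφ.injective.extend_apply]
    exact hh.odd p hp
  · obtain ⟨p, rfl⟩ := hrange p hp
    rw [hφ.injective.extend_apply]
    exact hh.le p hp
  · obtain ⟨p, rfl⟩ := hrange p hp
    obtain ⟨q, rfl⟩ := hrange q hq
    rw [hφ.injective.extend_apply, hφ.injective.extend_apply]
    exact hh.monotoneOn hp hq (hφ.le_iff_le.1 hpq)

theorem of_lt (hab : a ≠ b) (h : ∀ p q, w p = a → w q = b → p < q) : AltLE w 1 a b := by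
  classical
  refine ⟨fun p => if w p = a then 0 else 1, ?_, ?_, ?_, ?_⟩
  · rintro p rfl
    simp
  · rintro p rfl
    simp [hab.symm]
  · intro p _
    split_ifs <;> simp
  · intro p hp q _ hpq
    have : w q = a → w p ≠ b := fun hqa hpb => hpq.not_gt (h q p hqa hpb)
    grind

theorem swap_of_first (hw : AltLE w s b a) {p₀ : α} (hp₀ : w p₀ = a)
    (hfirst : ∀ p, w p = b → p₀ ≤ p) : AltLE w s a b := by
  obtain ⟨h, hh⟩ := hw
  have hpos : ∀ p, w p = a ∨ w p = b → 1 ≤ h p := by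
    rintro p (hp | hp)
    · exact (hh.odd p hp).pos
    · exact (hh.odd p₀ hp₀).pos.trans_le
        (hh.monotoneOn (Or.inr hp₀) (Or.inl hp) (hfirst p hp))
  refine ⟨fun p => h p - 1, fun p hp => ?_, fun p hp => ?_, fun p hp => ?_, ?_⟩
  · exact (hh.odd p hp).tsub_odd odd_one
  · exact Nat.Even.sub_odd (hpos p (Or.inr hp)) (hh.even p hp) odd_one
  · exact (Nat.sub_le _ _).trans (hh.le p hp.symm)
  · exact fun p hp q hq hpq => Nat.sub_le_sub_right (hh.monotoneOn hp.symm hq.symm hpq) 1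

end AltLE

end Alternation

section Appearance

variable {α L : Type*} [LinearOrder α]

/-- The list `l` is a subsequence of the word `w`, read at positions in `U` only. -/
def Appears (w : α → L) (U : Set α) (l : List L) : Prop :=
  ∃ ps : List α, ps.Pairwise (· < ·) ∧ (∀ p ∈ ps, p ∈ U) ∧ ps.map w = l

/-- The alternation `a b a b …` of length `n` is a subsequence of the word `w`, read at positions
in `U` only. -/
def HasAlternation (w : α → L) (U : Set α) (n : ℕ) (a b : L) : Prop :=
  ∃ f : Fin n → α, StrictMono f ∧ ∀ i, f i ∈ U ∧ w (f i) = if Even i.val then a else b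

variable {w : α → L} {U V : Set α} {n s : ℕ} {a b : L}

theorem Appears.exists_cons {l : List L} (h : Appears w U (a :: l)) :
    ∃ p ∈ U, w p = a ∧ Appears w (U ∩ Set.Ioi p) l := by
  obtain ⟨ps, hps, hU, hw⟩ := h
  obtain ⟨p, qs, rfl, rfl, rfl⟩ := List.map_eq_cons_iff.1 hw
  rw [List.pairwise_cons] at hps
  exact ⟨p, hU p List.mem_cons_self, rfl, qs, hps.2,
    fun q hq => ⟨hU q (List.mem_cons_of_mem p hq), hps.1 q hq⟩, rfl⟩

theorem Appears.mono {l : List L} (h : Appears w U l) (hUV : U ⊆ V) : Appears w V l :=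
  h.imp fun _ hps => ⟨hps.1, fun p hp => hUV (hps.2.1 p hp), hps.2.2⟩

theorem HasAlternation.mono (h : HasAlternation w U n a b) (hUV : U ⊆ V) :
    HasAlternation w V n a b :=
  h.imp fun _ hf => ⟨hf.1, fun i => ⟨hUV (hf.2 i).1, (hf.2 i).2⟩⟩

theorem HasAlternation.cons {p : α} (hp : p ∈ U) (hpb : w p = b)
    (h : HasAlternation w (U ∩ Set.Ioi p) n a b) : HasAlternation w U (n + 1) b a := by
  obtain ⟨f, hf, hfU⟩ := h
  refine ⟨Fin.cons p f, Fin.strictMono_cons.2 ⟨fun i => (hfU i).1.2, hf⟩, fun i => ?_⟩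
  induction i using Fin.cases with
  | zero => simpa using ⟨hp, hpb⟩
  | succ i =>
    simp only [Fin.cons_succ, Fin.val_succ, Nat.even_add_one, ite_not]
    exact ⟨(hfU i).1.1, (hfU i).2⟩

theorem HasAlternation.singleton {p : α} (hp : p ∈ U) (hpa : w p = a) :
    HasAlternation w U 1 a b :=
  ⟨fun _ => p, Subsingleton.strictMono _, fun i => by simp [hp, hpa]⟩

theorem HasAlternation.le_of_isHeight {h : α → ℕ} (halt : HasAlternation w U n a b)
    (hh : IsHeight w s a b h ∨ IsHeight w s b a h) : n ≤ s + 1 := by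
  obtain ⟨f, hf, hfU⟩ := halt
  have hletter : ∀ i, w (f i) = a ∨ w (f i) = b := fun i => by
    rw [(hfU i).2]
    exact ite_eq_or_eq _ _ _
  have hle : ∀ i, h (f i) ≤ s := fun i =>
    hh.elim (·.le _ (hletter i)) (·.le _ (hletter i).symm)
  have hmono : ∀ i j, i ≤ j → h (f i) ≤ h (f j) := fun i j hij =>
    hh.elim (·.monotoneOn (hletter i) (hletter j) (hf.monotone hij))
      (·.monotoneOn (hletter i).symm (hletter j).symm (hf.monotone hij))
  have hne : ∀ p q, w p = a → w q = b → h p ≠ h q := by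
    rintro p q hp hq hpq
    rcases hh with hh | hh
    · exact Nat.not_even_iff_odd.2 (hh.odd q hq) (hpq ▸ hh.even p hp)
    · exact Nat.not_even_iff_odd.2 (hh.odd p hp) (hpq ▸ hh.even q hq)
  have hstrict : StrictMono (h ∘ f) := by
    cases n with
    | zero => exact Subsingleton.strictMono _
    | succ n =>
      refine Fin.strictMono_iff_lt_succ.2 fun i =>
        (hmono _ _ (Fin.castSucc_lt_succ).le).lt_of_ne ?_
      have hi := (hfU i.castSucc).2
      have hi' := (hfU i.succ).2
      simp only [Fin.val_castSucc, Fin.val_succ, Nat.even_add_one, ite_not] at hi hi'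
      split_ifs at hi hi'
      · exact hne _ _ hi hi'
      · exact (hne _ _ hi' hi).symm
  simpa using Fintype.card_le_of_injective
    (fun i => (⟨h (f i), Nat.lt_succ_of_le (hle i)⟩ : Fin (s + 1)))
    fun i j hij => hstrict.injective (congrArg Fin.val hij)

theorem Appears.exists_hasAlternation_pair (hab : Appears w U [a, b])
    (hba : Appears w U [b, a]) (hne : a ≠ b) :
    HasAlternation w U 3 a b ∨ HasAlternation w U 3 b a := by
  obtain ⟨p, hp, hpa, hb⟩ := hab.exists_cons
  obtain ⟨q, hq, hqb, ha⟩ := hba.exists_cons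
  obtain ⟨q', hq', hqb', -⟩ := hb.exists_cons
  obtain ⟨p', hp', hpa', -⟩ := ha.exists_cons
  rcases lt_trichotomy p q with hpq | rfl | hpq
  · exact Or.inl (.cons hp hpa (.cons ⟨hq, hpq⟩ hqb
      (.singleton ⟨⟨hp'.1, hpq.trans hp'.2⟩, hp'.2⟩ hpa')))
  · exact absurd (hpa.symm.trans hqb) hne
  · exact Or.inr (.cons hq hqb (.cons ⟨hp, hpq⟩ hpa
      (.singleton ⟨⟨hq'.1, hpq.trans hq'.2⟩, hq'.2⟩ hqb')))

theorem exists_hasAlternation_of_appears [WellFoundedLT α] [DecidableEq L] {r : ℕ} {A : Finset L}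
    (hA : A.card = r + 2) (h : ∀ l : List L, l.Nodup → l.toFinset = A → Appears w U l) :
    ∃ a ∈ A, ∃ b ∈ A, a ≠ b ∧ HasAlternation w U (r + 3) a b := by
  induction r generalizing A U with
  | zero =>
    obtain ⟨a, b, hab, rfl⟩ := Finset.card_eq_two.1 hA
    have hpair := (h [a, b] (by simp [hab]) (by simp)).exists_hasAlternation_pair
      (h [b, a] (by simp [hab.symm]) (by simp [Finset.pair_comm])) hab
    rcases hpair with hpair | hpair
    · exact ⟨a, by simp, b, by simp, hab, hpair⟩
    · exact ⟨b, by simp, a, by simp, hab.symm, hpair⟩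
  | succ r ih =>
    have hcons : ∀ a ∈ A, ∀ l : List L, l.Nodup → l.toFinset = A.erase a →
        Appears w U (a :: l) := fun a ha l hl hlA =>
      h _ (List.nodup_cons.2 ⟨fun hal => by grind [List.mem_toFinset.2 hal], hl⟩)
        (by rw [List.toFinset_cons, hlA, Finset.insert_erase ha])
    have hfirst : ∀ a ∈ A, ∃ p ∈ U, w p = a ∧ ∀ q ∈ U, w q = a → p ≤ q := by
      intro a ha
      obtain ⟨p, hp, hpa, -⟩ := (hcons a ha (A.erase a).toList (Finset.nodup_toList _)
        (Finset.toList_toFinset _)).exists_cons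
      obtain ⟨x, hx, hmin⟩ := wellFounded_lt.has_min {p ∈ U | w p = a} ⟨p, hp, hpa⟩
      exact ⟨x, hx.1, hx.2, fun q hq hqa => not_lt.1 (hmin q ⟨hq, hqa⟩)⟩
    obtain ⟨a₀, ha₀⟩ : A.Nonempty := Finset.card_pos.1 (by omega)
    have : Nonempty α := ⟨(hfirst a₀ ha₀).choose⟩
    choose! first hfirstU hfirst hmin using hfirst
    obtain ⟨z, hz, hlast⟩ := A.exists_max_image first ⟨a₀, ha₀⟩
    obtain ⟨a, ha, b, hb, hab, halt⟩ := ih (A := A.erase z) (U := U ∩ Set.Ioi (first z))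
      (by rw [Finset.card_erase_of_mem hz]; omega) fun l hl hlA => by
        obtain ⟨p, hp, hpz, hl⟩ := (hcons z hz l hl hlA).exists_cons
        exact hl.mono (Set.inter_subset_inter_right _ (Set.Ioi_subset_Ioi (hmin z hz p hp hpz)))
    have haA := Finset.mem_of_mem_erase ha
    have hbA := Finset.mem_of_mem_erase hb
    exact ⟨b, hbA, a, haA, hab.symm, .cons (hfirstU b hbA) (hfirst b hbA)
      (halt.mono (Set.inter_subset_inter_right _ (Set.Ioi_subset_Ioi (hlast b hbA))))⟩

end Appearance

section Transversals

variable {α L : Type*} [LinearOrder α] {n : ℕ}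

open scoped Classical in
/-- The permutations that sort the letters `e 0, …, e (n - 1)` by the position of a chosen
occurrence of each of them in the word `w`. -/
noncomputable def transversalPerms (w : α → L) (e : Fin n → L) : Finset (Equiv.Perm (Fin n)) :=
  {π | ∃ x : Fin n → α, (∀ c, w (x c) = e c) ∧ ∀ c c', π c < π c' ↔ x c < x c'}

variable {w : α → L} {e : Fin n → L}

theorem mem_transversalPerms {π : Equiv.Perm (Fin n)} :
    π ∈ transversalPerms w e ↔
      ∃ x : Fin n → α, (∀ c, w (x c) = e c) ∧ ∀ c c', π c < π c' ↔ x c < x c' := by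
  simp [transversalPerms]

theorem exists_perm_pairwise_lt {m : ℕ} {l : List (Fin m)} (hl : l.Nodup) (hmem : ∀ i, i ∈ l) :
    ∃ σ : Equiv.Perm (Fin m), l.Pairwise fun i j => σ i < σ j := by
  have hlen : l.length = m := by
    simpa using Fintype.card_congr (hl.getEquivOfForallMemList l hmem)
  refine ⟨(hl.getEquivOfForallMemList l hmem).symm.trans (finCongr hlen), ?_⟩
  rw [List.pairwise_iff_getElem]
  intro i j hi hj hij
  simpa [Fin.lt_def, hl.idxOf_getElem] using hij

theorem Shatters.appears {m : ℕ} {a : Fin m → Fin n} (hsh : Shatters (transversalPerms w e) a)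
    {l : List (Fin m)} (hl : l.Nodup) (hmem : ∀ i, i ∈ l) :
    Appears w Set.univ (l.map (e ∘ a)) := by
  obtain ⟨σ, hσ⟩ := exists_perm_pairwise_lt hl hmem
  obtain ⟨π, hπ, hres⟩ := hsh.2 σ
  obtain ⟨x, hx, hlt⟩ := mem_transversalPerms.1 hπ
  refine ⟨l.map (x ∘ a), ?_, fun _ _ => trivial, ?_⟩
  · exact List.pairwise_map.2 (hσ.imp fun hij => (hlt _ _).1 ((hres _ _).1 hij))
  · simp [hx]

theorem vcDimLE_transversalPerms [WellFoundedLT α] {s k : ℕ} (hw : IsDavenportSchinzel s w)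
    (he : Function.Injective e) (hsk : s ≤ k) (hk : 1 ≤ k) :
    VCDimLE n k (transversalPerms w e) := by
  classical
  intro a hsh
  obtain ⟨r, rfl⟩ : ∃ r, k = r + 1 := Nat.exists_eq_add_of_le' hk
  have hinj : Function.Injective (e ∘ a) := he.comp hsh.1.injective
  obtain ⟨x, -, y, -, hxy, halt⟩ := exists_hasAlternation_of_appears (w := w) (U := Set.univ)
      (r := r) (A := Finset.univ.image (e ∘ a)) (by simp [Finset.card_image_of_injective _ hinj])
      fun l hl hlA => by
    have hrange : ∀ z, z ∈ l ↔ ∃ i, (e ∘ a) i = z := fun z => by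
      rw [← List.mem_toFinset, hlA]
      simp
    obtain ⟨l, rfl⟩ : l ∈ Set.range (List.map (e ∘ a)) := by
      rw [Set.range_list_map]
      exact fun z hz => (hrange z).1 hz
    exact hsh.appears hl.of_map fun i =>
      (List.mem_map_of_injective hinj).1 ((hrange _).2 ⟨i, rfl⟩)
  have hlen : r + 3 ≤ s + 1 := by
    rcases hw x y hxy with ⟨h, hh⟩ | ⟨h, hh⟩
    · exact halt.le_of_isHeight (.inl hh)
    · exact halt.le_of_isHeight (.inr hh)
  omega

theorem vcDimLE_singleton_one {k : ℕ} (hk : 1 ≤ k) : VCDimLE n k {1} := by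
  rintro a ⟨ha, hsh⟩
  obtain ⟨π, hπ, hres⟩ := hsh (Equiv.swap 0 (Fin.last k))
  obtain rfl := Finset.mem_singleton.1 hπ
  have hlt : (0 : Fin (k + 1)) < Fin.last k := Fin.lt_def.2 hk
  have := (hres 0 (Fin.last k)).2 (ha hlt)
  rw [Equiv.swap_apply_left, Equiv.swap_apply_right] at this
  exact this.not_gt hlt

end Transversals

section BlockWords

variable {ι κ L : Type*}

/-- The word obtained by concatenating the blocks `w i`. -/
def flatWord (w : ι → κ → L) (p : ι ×ₗ κ) : L :=
  w (ofLex p).1 (ofLex p).2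

/-- All letters within a block are distinct, and every letter has exactly `μ` occurrences. -/
structure IsUniform (μ : ℕ) (w : ι → κ → L) : Prop where
  injective : ∀ i, Function.Injective (w i)
  card_fiber : ∀ a, Nat.card {p // flatWord w p = a} = μ

theorem IsUniform.card_mul_card [Finite ι] [Finite κ] [Finite L] {μ : ℕ} {w : ι → κ → L}
    (hw : IsUniform μ w) : Nat.card ι * Nat.card κ = Nat.card L * μ := by
  have := Fintype.ofFinite L
  have : Finite (ι ×ₗ κ) := inferInstanceAs (Finite (ι × κ))
  calc Nat.card ι * Nat.card κ = Nat.card (ι ×ₗ κ) := (Nat.card_prod ι κ).symm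
    _ = Nat.card (Σ a, {p // flatWord w p = a}) :=
      (Nat.card_congr (Equiv.sigmaFiberEquiv (flatWord w))).symm
    _ = Nat.card L * μ := by simp [Nat.card_sigma, hw.card_fiber]

theorem card_fiber_comp_of_injective {α β : Type*} {w : α → L} {a : L} {φ : β → α}
    (hφ : Function.Injective φ) (hrange : ∀ p, w p = a → p ∈ Set.range φ) :
    Nat.card {q // w (φ q) = a} = Nat.card {p // w p = a} :=
  Nat.card_preimage_of_injective (s := {p | w p = a}) hφ hrange

variable [LinearOrder ι] [LinearOrder κ]

/-- A block which contains the letter `x` before the letter `y` is preceded by occurrences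
`y … y x … x` of these letters and followed by `x … x y … y`, and no other block contains both of
them. Such a block can be replaced by a word of its own. -/
structure IsNested (w : ι → κ → L) : Prop where
  before {i₀ : ι} {j₀ j₁ : κ} (hj : j₀ < j₁) {i i' : ι} {j j' : κ} (hx : w i j = w i₀ j₀)
    (hy : w i' j' = w i₀ j₁) (hi : i' < i₀) : i' < i
  after {i₀ : ι} {j₀ j₁ : κ} (hj : j₀ < j₁) {i i' : ι} {j j' : κ} (hx : w i j = w i₀ j₀)
    (hy : w i' j' = w i₀ j₁) (hi : i₀ < i') : i < i'

/-- The words built by the recursion: uniform Davenport–Schinzel block words with nested blocks. -/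
structure IsNestedDS (s μ : ℕ) (w : ι → κ → L) : Prop
    extends IsUniform μ w, IsNested w where
  isDavenportSchinzel : IsDavenportSchinzel s (flatWord w)

/-- Uniform Davenport–Schinzel block words over ordered letters, such that every alternation of the
maximal length `s + 1` starts with the smaller one of its two letters. -/
structure IsSortedDS [LT L] (s μ : ℕ) (w : ι → κ → L) : Prop extends IsUniform μ w where
  altLE : ∀ a b, a < b → AltLE (flatWord w) s a b

theorem IsSortedDS.isDavenportSchinzel [LinearOrder L] {s μ : ℕ} {w : ι → κ → L}
    (hw : IsSortedDS s μ w) : IsDavenportSchinzel s (flatWord w) :=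
  fun a b hab => hab.lt_or_gt.imp (hw.altLE a b) (hw.altLE b a)

end BlockWords

section Substitution

variable {ι ι₁ ι₂ β φ L₁ L₂ : Type*}

theorem IsUniform.card_fiber_comp [Finite ι] [Finite β] [Finite L₂] {μ₁ μ₂ : ℕ} {w : ι → L₂ → L₁}
    {v : β → L₂} (hw : IsUniform μ₁ w) (hv : ∀ b, Nat.card {q // v q = b} = μ₂) (a : L₁) :
    Nat.card {p // flatWord (fun i q => w i (v q)) p = a} = μ₁ * μ₂ := by
  have : Finite (ι ×ₗ L₂) := inferInstanceAs (Finite (ι × L₂))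
  have := Fintype.ofFinite {p // flatWord w p = a}
  let e : {p // flatWord (fun i q => w i (v q)) p = a} ≃
      Σ p : {p // flatWord w p = a}, {q // v q = (ofLex p.1).2} :=
    { toFun := fun p => ⟨⟨toLex ((ofLex p.1).1, v (ofLex p.1).2), p.2⟩, ⟨(ofLex p.1).2, rfl⟩⟩
      invFun := fun p => ⟨toLex ((ofLex p.1.1).1, p.2.1), by
        simpa [flatWord, p.2.2] using p.1.2⟩
      left_inv := fun p => rfl
      right_inv := fun p => Sigma.subtype_ext
        (Subtype.ext (congrArg (fun b => toLex ((ofLex p.1.1).1, b)) p.2.2)) rfl }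
  rw [Nat.card_congr e, Nat.card_sigma]
  simp [hv, ← Nat.card_eq_fintype_card, hw.card_fiber]

/-- Each block of `w₁` is expanded into a word by spelling `w₂` with the letters of that block; the
blocks of the result are those of the copies of `w₂`. -/
def substWord (w₁ : ι₁ → L₂ → L₁) (w₂ : ι₂ → φ → L₂) (p : ι₁ ×ₗ ι₂) (c : φ) : L₁ :=
  w₁ (ofLex p).1 (w₂ (ofLex p).2 c)

variable {w₁ : ι₁ → L₂ → L₁} {w₂ : ι₂ → φ → L₂}

theorem IsUniform.subst [Finite ι₁] [Finite ι₂] [Finite φ] [Finite L₂] {μ₁ μ₂ : ℕ}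
    (hw₁ : IsUniform μ₁ w₁) (hw₂ : IsUniform μ₂ w₂) :
    IsUniform (μ₁ * μ₂) (substWord w₁ w₂) where
  injective p := (hw₁.injective _).comp (hw₂.injective _)
  card_fiber a := by
    have : Finite (ι₂ ×ₗ φ) := inferInstanceAs (Finite (ι₂ × φ))
    rw [← hw₁.card_fiber_comp hw₂.card_fiber a]
    exact Nat.card_congr
      ((Equiv.prodAssoc ι₁ ι₂ φ).subtypeEquiv fun _ => Iff.rfl)

variable [LinearOrder ι] [LinearOrder ι₁] [LinearOrder ι₂] [LinearOrder β] [LinearOrder φ]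
  [LinearOrder L₂]

theorem IsNestedDS.altLE_comp_of_mem_block {s μ : ℕ} {w : ι → L₂ → L₁} {v : β → L₂} (hs : Even s)
    (hw : IsNestedDS (s + 2) μ w) (hv : ∀ a b, a < b → AltLE v s a b) {i₀ : ι} {j₀ j₁ : L₂}
    (hj : j₀ < j₁) :
    AltLE (flatWord fun i q => w i (v q)) (s + 2) (w i₀ j₁) (w i₀ j₀) := by
  classical
  obtain ⟨h, hh⟩ := hv j₀ j₁ hj
  have hbefore (i i' j j') := hw.before (i₀ := i₀) hj (i := i) (i' := i') (j := j) (j' := j')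
  have hafter (i i' j j') := hw.after (i₀ := i₀) hj (i := i) (i' := i') (j := j) (j' := j')
  have hinj (j j') := (hw.injective i₀).eq_iff (a := j) (b := j')
  have heven (q) (hq : v q = j₀) := hh.even q hq
  have hodd (q) (hq : v q = j₁) := hh.odd q hq
  have hle := hh.le
  let height : ι ×ₗ β → ℕ := fun p =>
    if (ofLex p).1 < i₀ then if w (ofLex p).1 (v (ofLex p).2) = w i₀ j₀ then 1 else 0
    else if (ofLex p).1 = i₀ then 1 + h (ofLex p).2
    else if w (ofLex p).1 (v (ofLex p).2) = w i₀ j₀ then s + 1 else s + 2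
  refine ⟨height, ?_, ?_, ?_, ?_⟩
  · rintro p (hp : w _ _ = _)
    grind
  · rintro p (hp : w _ _ = _)
    grind
  · rintro p (hp : w _ _ = _ ∨ w _ _ = _)
    grind
  · rintro p (hp : w _ _ = _ ∨ w _ _ = _) q (hq : w _ _ = _ ∨ w _ _ = _) hpq
    have hmono := @hh.monotoneOn (ofLex p).2
    obtain ⟨hle₁, hle₂⟩ := Prod.Lex.le_iff'.1 hpq
    rcases lt_trichotomy (ofLex p).1 i₀ with hpi | hpi | hpi
    · grind
    · simp only [Set.mem_ofPred_eq] at hmono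
      grind
    · grind

theorem altLE_comp_of_not_mem_block {s : ℕ} {w : ι → L₂ → L₁} {v : β → L₂} {x y : L₁}
    (hw : ∀ i, Function.Injective (w i)) (hxy : AltLE (flatWord w) s x y)
    (hblock : ∀ i j j', w i j = x → w i j' ≠ y) :
    AltLE (flatWord fun i q => w i (v q)) s x y := by
  refine hxy.comap (fun p => toLex ((ofLex p).1, v (ofLex p).2)) ?_ (fun _ hp => hp) fun _ hp => hp
  rintro p (hp : w _ _ = _ ∨ w _ _ = _) q (hq : w _ _ = _ ∨ w _ _ = _) hpq
  obtain ⟨hle, -⟩ := Prod.Lex.le_iff'.1 hpq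
  rw [Prod.Lex.toLex_le_toLex']
  refine ⟨hle, fun (hi : (ofLex p).1 = (ofLex q).1) => le_of_eq (hw _ (?_ : w (ofLex p).1 _ = _))⟩
  rw [← hi] at hq
  grind

theorem IsNestedDS.isDavenportSchinzel_comp {s μ : ℕ} {w : ι → L₂ → L₁} {v : β → L₂} (hs : Even s)
    (hw : IsNestedDS (s + 2) μ w) (hv : ∀ a b, a < b → AltLE v s a b) :
    IsDavenportSchinzel (s + 2) (flatWord fun i q => w i (v q)) := by
  intro x y hxy
  by_cases hblock : ∃ i j j', w i j = x ∧ w i j' = y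
  · obtain ⟨i, j, j', rfl, rfl⟩ := hblock
    rcases lt_trichotomy j j' with hj | rfl | hj
    · exact .inr (hw.altLE_comp_of_mem_block hs hv hj)
    · exact absurd rfl hxy
    · exact .inl (hw.altLE_comp_of_mem_block hs hv hj)
  · push Not at hblock
    exact (hw.isDavenportSchinzel x y hxy).imp
      (altLE_comp_of_not_mem_block hw.injective · hblock)
      (altLE_comp_of_not_mem_block hw.injective · fun i j j' hy hx => hblock i j' j hx hy)

theorem IsNestedDS.isDavenportSchinzel_subst {s μ₁ μ₂ : ℕ} (hs : Even s)
    (hw₁ : IsNestedDS (s + 2) μ₁ w₁) (hw₂ : IsSortedDS s μ₂ w₂) :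
    IsDavenportSchinzel (s + 2) (flatWord (substWord w₁ w₂)) := fun x y hxy =>
  have hmono := (Prod.Lex.prodLexAssoc ι₁ ι₂ φ).monotone.monotoneOn
  (hw₁.isDavenportSchinzel_comp hs hw₂.altLE x y hxy).imp
    (·.comap _ (hmono _) (fun _ hp => hp) fun _ hp => hp)
    (·.comap _ (hmono _) (fun _ hp => hp) fun _ hp => hp)

end Substitution

section Replication

variable {β ι κ L : Type*}

/-- The concatenation of copies of the block word `w`, indexed by `β` and over disjoint
alphabets. -/
def replicateWord (β : Type*) (w : ι → κ → L) (p : β ×ₗ ι) (j : κ) : β × L :=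
  ((ofLex p).1, w (ofLex p).2 j)

variable {w : ι → κ → L} {s μ : ℕ}

theorem mem_range_of_replicateWord_eq {b : β} {a : L} {p : (β ×ₗ ι) ×ₗ κ}
    (hp : flatWord (replicateWord β w) p = (b, a)) :
    p ∈ Set.range fun q : ι ×ₗ κ => toLex (toLex (b, (ofLex q).1), (ofLex q).2) := by
  obtain rfl := congrArg Prod.fst hp
  exact ⟨toLex ((ofLex (ofLex p).1).2, (ofLex p).2), rfl⟩

theorem IsUniform.replicate (hw : IsUniform μ w) : IsUniform μ (replicateWord β w) where
  injective p j j' h := hw.injective _ (congrArg Prod.snd h)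
  card_fiber := fun ⟨b, a⟩ => by
    rw [← hw.card_fiber a, ← card_fiber_comp_of_injective ?_
      fun p hp => mem_range_of_replicateWord_eq hp]
    · exact Nat.card_congr (Equiv.subtypeEquivRight fun q => by simp [flatWord, replicateWord])
    · intro p q hpq
      simp only [EmbeddingLike.apply_eq_iff_eq, Prod.mk.injEq, true_and] at hpq
      exact ofLex_inj.1 (Prod.ext hpq.1 hpq.2)

variable [LinearOrder β] [LinearOrder ι] [LinearOrder κ]

theorem IsNested.replicate (hw : IsNested w) : IsNested (replicateWord β w) where
  before {i₀ j₀ j₁} hj {i i' j j'} hx hy hi := by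
    simp only [replicateWord, Prod.mk.injEq] at hx hy
    rw [Prod.Lex.lt_iff] at hi ⊢
    have := hw.before hj hx.2 hy.2
    grind
  after {i₀ j₀ j₁} hj {i i' j j'} hx hy hi := by
    simp only [replicateWord, Prod.mk.injEq] at hx hy
    rw [Prod.Lex.lt_iff] at hi ⊢
    have := hw.after hj hx.2 hy.2
    grind

theorem altLE_replicateWord_of_lt {b b' : β} (hb : b < b') (a a' : L) :
    AltLE (flatWord (replicateWord β w)) 1 (b, a) (b', a') := by
  refine .of_lt (by simp [hb.ne]) fun p q hp hq => ?_
  obtain rfl := congrArg Prod.fst hp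
  obtain rfl := congrArg Prod.fst hq
  exact Prod.Lex.lt_iff.2 (.inl (Prod.Lex.lt_iff.2 (.inl hb)))

theorem AltLE.replicate {a a' : L} (hw : AltLE (flatWord w) s a a') (b : β) :
    AltLE (flatWord (replicateWord β w)) s (b, a) (b, a') := by
  refine of_comp (φ := fun q : ι ×ₗ κ => toLex (toLex (b, (ofLex q).1), (ofLex q).2)) ?_
    (hw.comap id (monotone_id.monotoneOn _) (fun _ hp => congrArg Prod.snd hp)
      fun _ hp => congrArg Prod.snd hp)
    fun p hp => hp.elim mem_range_of_replicateWord_eq mem_range_of_replicateWord_eq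
  intro p q hpq
  simpa [Prod.Lex.lt_iff] using Prod.Lex.lt_iff.1 hpq

theorem IsDavenportSchinzel.replicate (hw : IsDavenportSchinzel s (flatWord w)) (hs : 1 ≤ s) :
    IsDavenportSchinzel s (flatWord (replicateWord β w)) := by
  rintro ⟨b, a⟩ ⟨b', a'⟩ hne
  rcases lt_trichotomy b b' with hb | rfl | hb
  · exact .inl ((altLE_replicateWord_of_lt hb a a').mono hs)
  · exact (hw a a' (by simpa using hne)).imp (·.replicate b) (·.replicate b)
  · exact .inr ((altLE_replicateWord_of_lt hb a' a).mono hs)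

end Replication

section Appending

variable {ι κ L₁ L₂ : Type*}

/-- The letter `v i` is appended to the block `u i`; the two alphabets are kept apart. -/
def appendWord (v : ι → L₁) (u : ι → κ → L₂) (i : ι) : WithTop κ → L₁ ⊕ L₂ :=
  WithTop.recTopCoe (.inl (v i)) fun j => .inr (u i j)

variable {v : ι → L₁} {u : ι → κ → L₂}

@[simp] theorem appendWord_top (i : ι) : appendWord v u i ⊤ = .inl (v i) := rfl

@[simp] theorem appendWord_coe (i : ι) (j : κ) : appendWord v u i j = .inr (u i j) := rfl

theorem appendWord_eq_inl {i : ι} {j : WithTop κ} {a : L₁} :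
    appendWord v u i j = .inl a ↔ j = ⊤ ∧ v i = a := by
  induction j using WithTop.recTopCoe <;> simp

theorem appendWord_eq_inr {i : ι} {j : WithTop κ} {b : L₂} :
    appendWord v u i j = .inr b ↔ ∃ j' : κ, j = j' ∧ u i j' = b := by
  induction j using WithTop.recTopCoe <;> simp

theorem mem_range_of_appendWord_eq_inl {p : ι ×ₗ WithTop κ} {a : L₁}
    (hp : flatWord (appendWord v u) p = .inl a) :
    p ∈ Set.range fun i : ι => toLex (i, (⊤ : WithTop κ)) :=
  ⟨(ofLex p).1, congrArg (fun j => toLex ((ofLex p).1, j)) (appendWord_eq_inl.1 hp).1.symm⟩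

theorem mem_range_of_appendWord_eq_inr {p : ι ×ₗ WithTop κ} {b : L₂}
    (hp : flatWord (appendWord v u) p = .inr b) :
    p ∈ Set.range fun q : ι ×ₗ κ => toLex ((ofLex q).1, ((ofLex q).2 : WithTop κ)) := by
  obtain ⟨j, hj, -⟩ := appendWord_eq_inr.1 hp
  exact ⟨toLex ((ofLex p).1, j), congrArg (fun j => toLex ((ofLex p).1, j)) hj.symm⟩

theorem IsUniform.append {μ : ℕ} (hv : ∀ a, Nat.card {i // v i = a} = μ) (hu : IsUniform μ u) :
    IsUniform μ (appendWord v u) where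
  injective i j j' h := by
    induction j using WithTop.recTopCoe <;> induction j' using WithTop.recTopCoe
    · rfl
    · simp at h
    · simp at h
    · exact congrArg _ (hu.injective i (by simpa using h))
  card_fiber
    | .inl a => by
      rw [← hv a, ← card_fiber_comp_of_injective ?_ fun p hp => mem_range_of_appendWord_eq_inl hp]
      · simp [flatWord]
      · exact fun i i' h => by simpa using h
    | .inr b => by
      rw [← hu.card_fiber b, ← card_fiber_comp_of_injective ?_ fun p hp =>
        mem_range_of_appendWord_eq_inr hp]
      · simp [flatWord]
      · intro p q h
        simp only [EmbeddingLike.apply_eq_iff_eq, Prod.mk.injEq, WithTop.coe_inj] at h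
        exact ofLex_inj.1 (Prod.ext h.1 h.2)

variable [LinearOrder ι] [LinearOrder κ] {s : ℕ}

theorem AltLE.append_inl {a a' : L₁} (h : AltLE v s a a') :
    AltLE (flatWord (appendWord v u)) s (.inl a) (.inl a') :=
  h.comap (fun p => (ofLex p).1) (Prod.Lex.monotone_fst_ofLex.monotoneOn _)
    (fun _ hp => (appendWord_eq_inl.1 hp).2) fun _ hp => (appendWord_eq_inl.1 hp).2

theorem AltLE.append_inr {b b' : L₂} (h : AltLE (flatWord u) s b b') :
    AltLE (flatWord (appendWord v u)) s (.inr b) (.inr b') := by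
  refine .of_comp (φ := fun q : ι ×ₗ κ => toLex ((ofLex q).1, ((ofLex q).2 : WithTop κ))) ?_
    (h.comap id (monotone_id.monotoneOn _) (fun _ hp => Sum.inr_injective hp)
      fun _ hp => Sum.inr_injective hp)
    fun p hp => hp.elim mem_range_of_appendWord_eq_inr mem_range_of_appendWord_eq_inr
  intro p q hpq
  simpa [Prod.Lex.lt_iff] using Prod.Lex.lt_iff.1 hpq

theorem IsNested.append (hu : IsNested u) (h : ∀ {i₀ i i' j j'}, u i j = u i₀ j' → v i' = v i₀ →
    (i' < i₀ → i' < i) ∧ (i₀ < i' → i < i')) : IsNested (appendWord v u) where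
  before {i₀ j₀ j₁} hj {i i' j j'} hx hy hi := by
    lift j₀ to κ using hj.ne_top
    obtain ⟨j, rfl, hxu⟩ := appendWord_eq_inr.1 hx
    induction j₁ using WithTop.recTopCoe with
    | top => exact (h hxu (appendWord_eq_inl.1 hy).2).1 hi
    | coe j₁ =>
      obtain ⟨j', rfl, hyu⟩ := appendWord_eq_inr.1 hy
      exact hu.before (WithTop.coe_lt_coe.1 hj) hxu hyu hi
  after {i₀ j₀ j₁} hj {i i' j j'} hx hy hi := by
    lift j₀ to κ using hj.ne_top
    obtain ⟨j, rfl, hxu⟩ := appendWord_eq_inr.1 hx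
    induction j₁ using WithTop.recTopCoe with
    | top => exact (h hxu (appendWord_eq_inl.1 hy).2).2 hi
    | coe j₁ =>
      obtain ⟨j', rfl, hyu⟩ := appendWord_eq_inr.1 hy
      exact hu.after (WithTop.coe_lt_coe.1 hj) hxu hyu hi

end Appending

section Combination

variable {β φ κ L₁ L₂ : Type*} {v : β → φ → L₁} {u : φ → κ → L₂}

theorem isNested_append_replicate [LinearOrder β] [LinearOrder φ] [LinearOrder κ]
    (hv : ∀ b, Function.Injective (v b)) (hu : IsNested u) :
    IsNested (appendWord (flatWord v) (replicateWord β u)) := by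
  refine hu.replicate.append fun {p₀ p p' j j'} hp hp' => ?_
  have hb : (ofLex p).1 = (ofLex p₀).1 := (Prod.ext_iff.1 hp).1
  have hc : (ofLex p').1 = (ofLex p₀).1 → (ofLex p').2 = (ofLex p₀).2 := fun h =>
    hv _ (by rw [flatWord, h] at hp'; exact hp')
  simp only [Prod.Lex.lt_iff]
  grind

theorem altLE_append_replicate [LinearOrder β] [LinearOrder φ] [LinearOrder κ]
    (hv : ∀ b, Function.Injective (v b)) (a : L₁) (b : β) (x : L₂) :
    AltLE (flatWord (appendWord (flatWord v) (replicateWord β u))) 4 (.inl a) (.inr (b, x)) := by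
  classical
  have htop (p) (hp : flatWord (appendWord (flatWord v) (replicateWord β u)) p = .inl a) :
      (ofLex p).2 = ⊤ ∧ v (ofLex (ofLex p).1).1 (ofLex (ofLex p).1).2 = a :=
    appendWord_eq_inl (v := flatWord v).1 hp
  have hcoe (p) (hp : flatWord (appendWord (flatWord v) (replicateWord β u)) p = .inr (b, x)) :
      (ofLex p).2 ≠ ⊤ ∧ (ofLex (ofLex p).1).1 = b := by
    obtain ⟨j, hj, hb⟩ := appendWord_eq_inr.1 hp
    exact ⟨hj ▸ WithTop.coe_ne_top, congrArg Prod.fst hb⟩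
  -- `(b, x)` occurs only within `v b`, where `a` occurs at most once: `a … a x … x a x … x a … a`
  let height : (β ×ₗ φ) ×ₗ WithTop κ → ℕ := fun p =>
    if (ofLex p).2 = ⊤ then
      if (ofLex (ofLex p).1).1 < b then 0 else if (ofLex (ofLex p).1).1 = b then 2 else 4
    else if ∃ c < (ofLex (ofLex p).1).2, v b c = a then 3 else 1
  refine ⟨height, fun p hp => ?_, fun p hp => ?_, fun p _ => ?_, fun p hp q hq hpq => ?_⟩
  · simp only [height, (htop p hp).1, if_true]
    split_ifs <;> decide
  · simp only [height, (hcoe p hp).1, if_false]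
    split_ifs <;> decide
  · simp only [height]
    split_ifs <;> decide
  · obtain ⟨hpq₁, hpq₂⟩ := Prod.Lex.le_iff'.1 hpq
    obtain ⟨hpq₃, hpq₄⟩ := Prod.Lex.le_iff'.1 hpq₁
    rcases hp with hp | hp <;> rcases hq with hq | hq
    · simp only [height, htop p hp, htop q hq]
      grind
    · obtain ⟨hpt, hpa⟩ := htop p hp
      obtain ⟨hqt, hqb⟩ := hcoe q hq
      have hlt : (ofLex p).1 < (ofLex q).1 := hpq₁.lt_of_ne fun h =>
        hqt (top_le_iff.1 (hpt ▸ hpq₂ h))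
      simp only [height, hpt, hqt, if_true, if_false]
      have := Prod.Lex.lt_iff.1 hlt
      split_ifs <;> grind
    · obtain ⟨hpt, hpb⟩ := hcoe p hp
      obtain ⟨hqt, hqa⟩ := htop q hq
      simp only [height, hpt, hqt, if_true, if_false]
      split_ifs <;> grind
    · obtain ⟨hpt, hpb⟩ := hcoe p hp
      obtain ⟨hqt, hqb⟩ := hcoe q hq
      simp only [height, hpt, hqt, if_false]
      split_ifs <;> grind

theorem IsNestedDS.append_replicate [LinearOrder β] [LinearOrder φ] [LinearOrder κ] {s μ : ℕ}
    (hs : 4 ≤ s) (hv : IsUniform μ v) (hvs : IsDavenportSchinzel s (flatWord v))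
    (hu : IsNestedDS s μ u) : IsNestedDS s μ (appendWord (flatWord v) (replicateWord β u)) where
  toIsUniform := .append hv.card_fiber hu.replicate
  toIsNested := isNested_append_replicate hv.injective hu.toIsNested
  isDavenportSchinzel
    | .inl a, .inl a', h => (hvs a a' (by simpa using h)).imp .append_inl .append_inl
    | .inl a, .inr (b, x), _ => .inl ((altLE_append_replicate hv.injective a b x).mono hs)
    | .inr (b, x), .inl a, _ => .inr ((altLE_append_replicate hv.injective a b x).mono hs)
    | .inr y, .inr y', h =>
      (hu.isDavenportSchinzel.replicate (by lia) y y' (by simpa using h)).imp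
        .append_inr .append_inr

theorem IsNestedDS.combine {ι₁ ι₂ : Type*} [LinearOrder ι₁] [LinearOrder ι₂] [LinearOrder φ]
    [LinearOrder κ] [LinearOrder L₂] [Finite ι₁] [Finite ι₂] [Finite φ] [Finite L₂] {s μ₁ μ₂ : ℕ}
    {L₃ : Type*} {w₁ : ι₁ → L₂ → L₁} {w₂ : ι₂ → φ → L₂} {w₃ : φ → κ → L₃}
    (hs : Even s) (hs₂ : 2 ≤ s)
    (hw₁ : IsNestedDS (s + 2) μ₁ w₁) (hw₂ : IsSortedDS s μ₂ w₂)
    (hw₃ : IsNestedDS (s + 2) (μ₁ * μ₂) w₃) :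
    IsNestedDS (s + 2) (μ₁ * μ₂)
      (appendWord (flatWord (substWord w₁ w₂)) (replicateWord (ι₁ ×ₗ ι₂) w₃)) :=
  .append_replicate (by lia) (hw₁.toIsUniform.subst hw₂.toIsUniform)
    (hw₁.isDavenportSchinzel_subst hs hw₂) hw₃

end Combination

section Relabelling

variable {ι ι' κ κ' L L' : Type*} {w : ι → κ → L} {s μ : ℕ}

theorem IsUniform.relabel (hw : IsUniform μ w) (e : ι' ≃ ι) (f : κ' ≃ κ) (g : L ≃ L') :
    IsUniform μ fun i j => g (w (e i) (f j)) where
  injective i := g.injective.comp ((hw.injective _).comp f.injective)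
  card_fiber a := by
    rw [← hw.card_fiber (g.symm a)]
    exact Nat.card_congr ((e.prodCongr f).subtypeEquiv fun p => (g.eq_symm_apply).symm)

variable [LinearOrder ι] [LinearOrder κ]

theorem IsNestedDS.relabel [LinearOrder ι'] [LinearOrder κ'] (hw : IsNestedDS s μ w)
    (e : ι' ≃o ι) (f : κ' ≃o κ) (g : L ≃ L') :
    IsNestedDS s μ fun i j => g (w (e i) (f j)) where
  toIsUniform := hw.toIsUniform.relabel e.toEquiv f.toEquiv g
  before hj _ _ _ _ hx hy hi := e.lt_iff_lt.1 <|
    hw.before (f.lt_iff_lt.2 hj) (g.injective hx) (g.injective hy) (e.lt_iff_lt.2 hi)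
  after hj _ _ _ _ hx hy hi := e.lt_iff_lt.1 <|
    hw.after (f.lt_iff_lt.2 hj) (g.injective hx) (g.injective hy) (e.lt_iff_lt.2 hi)
  isDavenportSchinzel a b hab :=
    have hmono := (Prod.Lex.prodLexCongr e f).monotone.monotoneOn
    (hw.isDavenportSchinzel (g.symm a) (g.symm b) (by simpa using hab)).imp
      (·.comap _ (hmono _) (fun _ hp => g.eq_symm_apply.2 hp) fun _ hp => g.eq_symm_apply.2 hp)
      (·.comap _ (hmono _) (fun _ hp => g.eq_symm_apply.2 hp) fun _ hp => g.eq_symm_apply.2 hp)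

theorem IsDavenportSchinzel.altLE_of_forall_le {α : Type*} [LinearOrder α] {w : α → L}
    (hw : IsDavenportSchinzel s w) {a b : L} (hab : a ≠ b) {p₀ : α} (hp₀ : w p₀ = a)
    (hfirst : ∀ p, w p = b → p₀ ≤ p) : AltLE w s a b :=
  (hw a b hab).elim id (·.swap_of_first hp₀ hfirst)

/-- Number the letters in the order of their first occurrences. -/
theorem IsNestedDS.exists_isSortedDS [WellFoundedLT (ι ×ₗ κ)] {N : ℕ} {w : ι → κ → Fin N}
    (hw : IsNestedDS s μ w) (hμ : 0 < μ) :
    ∃ σ : Equiv.Perm (Fin N), IsSortedDS s μ fun i j => σ (w i j) := by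
  have hfirst (a : Fin N) : ∃ p, flatWord w p = a ∧ ∀ q, flatWord w q = a → p ≤ q := by
    have : Nonempty {p // flatWord w p = a} := (Nat.card_pos_iff.1 (hw.card_fiber a ▸ hμ)).1
    obtain ⟨p, hp, hmin⟩ := wellFounded_lt.has_min {p | flatWord w p = a} (nonempty_subtype.1 this)
    exact ⟨p, hp, fun q hq => not_lt.1 (hmin q hq)⟩
  choose first hfirst hle using hfirst
  have hinj : Function.Injective first := fun a b h => by rw [← hfirst a, ← hfirst b, h]
  have hsort := (Tuple.monotone_sort first).strictMono_of_injective
    (hinj.comp (Tuple.sort first).injective)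
  refine ⟨(Tuple.sort first).symm, hw.toIsUniform.relabel (.refl _) (.refl _) _, fun a b hab => ?_⟩
  refine (hw.isDavenportSchinzel.altLE_of_forall_le (by simpa using hab.ne) (hfirst _) fun p hp =>
    (hsort hab).le.trans (hle _ p hp)).comap id (monotone_id.monotoneOn _) ?_ ?_
  · exact fun p hp => (Equiv.symm_apply_eq _).1 hp
  · exact fun p hp => (Equiv.symm_apply_eq _).1 hp

end Relabelling

section BaseWords

variable {κ : Type*}

theorem IsUniform.of_bijective {ι L : Type*} {w : ι → κ → L}
    (hw : ∀ i, Function.Bijective (w i)) : IsUniform (Nat.card ι) w where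
  injective i := (hw i).injective
  card_fiber a := by
    refine Nat.card_eq_of_bijective (fun p => (ofLex p.1).1) ⟨?_, fun i => ?_⟩
    · rintro ⟨p, hp⟩ ⟨q, hq⟩ (h : (ofLex p).1 = (ofLex q).1)
      refine Subtype.ext (ofLex_inj.1 (Prod.ext h ((hw (ofLex p).1).injective ?_)))
      exact hp.trans (h ▸ hq.symm)
    · obtain ⟨j, hj⟩ := (hw i).surjective a
      exact ⟨⟨toLex (i, j), hj⟩, rfl⟩

theorem isNestedDS_single {ι : Type*} [LinearOrder ι] [Unique ι] [LinearOrder κ] {s : ℕ}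
    (hs : 1 ≤ s) : IsNestedDS s 1 (fun (_ : ι) (j : κ) => j) where
  toIsUniform := by
    simpa using IsUniform.of_bijective (w := fun (_ : ι) (j : κ) => j) fun _ =>
      Function.bijective_id
  before := fun _ _ _ _ _ _ _ h => absurd (Subsingleton.elim _ _) h.ne
  after := fun _ _ _ _ _ _ _ h => absurd (Subsingleton.elim _ _) h.ne
  isDavenportSchinzel a b hab := by
    have hlt {a b : κ} (hab : a < b) : AltLE (flatWord fun (_ : ι) (j : κ) => j) s a b :=
      (AltLE.of_lt hab.ne fun p q hp hq => Prod.Lex.lt_iff.2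
        (.inr ⟨Subsingleton.elim _ _, hp.trans_lt (hab.trans_eq hq.symm)⟩)).mono hs
    exact hab.lt_or_gt.imp hlt hlt

theorem isNestedDS_of_isEmpty {ι L : Type*} [LinearOrder ι] [LinearOrder κ] [IsEmpty κ] [IsEmpty L]
    (s μ : ℕ) (w : ι → κ → L) : IsNestedDS s μ w where
  injective _ := Function.injective_of_subsingleton _
  card_fiber := isEmptyElim
  before {_ j} := isEmptyElim j
  after {_ j} := isEmptyElim j
  isDavenportSchinzel := isEmptyElim

theorem isSortedDS_trough (m : ℕ) :
    IsSortedDS 2 2 (fun (i : Fin 2) (j : Fin m) => if i = 0 then j else j.rev) where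
  toIsUniform := by
    simpa using IsUniform.of_bijective
      (w := fun (i : Fin 2) (j : Fin m) => if i = 0 then j else j.rev)
      fun i => by split_ifs; exacts [Function.bijective_id, Fin.rev_bijective]
  altLE a b hab := by
    let height : Fin 2 ×ₗ Fin m → ℕ := fun p =>
      if (ofLex p).1 = 0 then if (ofLex p).2 = a then 0 else 1
      else if (ofLex p).2.rev = b then 1 else 2
    refine ⟨height, fun p hp => ?_, fun p hp => ?_, fun p _ => ?_, fun p hp q hq hpq => ?_⟩
    · simp only [flatWord] at hp
      simp only [height]
      split_ifs <;> grind
    · simp only [flatWord] at hp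
      simp only [height]
      split_ifs <;> grind
    · simp only [height]
      split_ifs <;> decide
    · obtain ⟨hpq₁, hpq₂⟩ := Prod.Lex.le_iff'.1 hpq
      simp only [flatWord, Set.mem_ofPred_eq] at hp hq
      simp only [height]
      split_ifs <;> grind [Fin.rev_rev]

end BaseWords

section Growth

/-- There is a word as in `IsNestedDS` with at least one block, blocks of length `m`, and at most
`B` blocks and letters. -/
def HasNestedDS (s μ m B : ℕ) : Prop :=
  ∃ g N, 0 < g ∧ g ≤ B ∧ N ≤ B ∧ ∃ w : Fin g → Fin m → Fin N, IsNestedDS s μ w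

/-- There is a word as in `IsSortedDS` with at least one block, blocks of length `m`, and at most
`B` blocks and letters. -/
def HasSortedDS (s μ m B : ℕ) : Prop :=
  ∃ g N, 0 < g ∧ g ≤ B ∧ N ≤ B ∧ ∃ w : Fin g → Fin m → Fin N, IsSortedDS s μ w

variable {s μ μ₁ μ₂ m B : ℕ}

theorem HasNestedDS.mono {B' : ℕ} (h : HasNestedDS s μ m B) (hB : B ≤ B') :
    HasNestedDS s μ m B' := by
  obtain ⟨g, N, hg, hgB, hNB, h⟩ := h
  exact ⟨g, N, hg, hgB.trans hB, hNB.trans hB, h⟩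

theorem HasSortedDS.mono {B' : ℕ} (h : HasSortedDS s μ m B) (hB : B ≤ B') :
    HasSortedDS s μ m B' := by
  obtain ⟨g, N, hg, hgB, hNB, h⟩ := h
  exact ⟨g, N, hg, hgB.trans hB, hNB.trans hB, h⟩

theorem HasNestedDS.hasSortedDS (h : HasNestedDS s μ m B) (hμ : 0 < μ) : HasSortedDS s μ m B := by
  obtain ⟨g, N, hg, hgB, hNB, w, hw⟩ := h
  obtain ⟨σ, hσ⟩ := hw.exists_isSortedDS hμ
  exact ⟨g, N, hg, hgB, hNB, _, hσ⟩

theorem IsNestedDS.hasNestedDS {ι κ L : Type*} [LinearOrder ι] [LinearOrder κ] [Fintype ι]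
    [Nonempty ι] [Fintype κ] [Finite L] {w : ι → κ → L} (hw : IsNestedDS s μ w)
    (hκ : Fintype.card κ = m) (hι : Fintype.card ι ≤ B) (hL : Nat.card L ≤ B) :
    HasNestedDS s μ m B :=
  ⟨_, _, Fintype.card_pos, hι, hL, _, hw.relabel (Fintype.orderIsoFinOfCardEq ι rfl)
    (Fintype.orderIsoFinOfCardEq κ hκ) (Finite.equivFin L)⟩

theorem HasNestedDS.succ {F X Y : ℕ} (hs : Even s) (hs₂ : 2 ≤ s) (hF : F ≤ Y) (hX : X ≤ Y)
    (h₁ : ∀ N ≤ X, HasNestedDS (s + 2) μ₁ N Y) (h₂ : ∀ f ≤ F, HasSortedDS s μ₂ f X)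
    (h₃ : HasNestedDS (s + 2) (μ₁ * μ₂) m F) :
    HasNestedDS (s + 2) (μ₁ * μ₂) (m + 1) (Y ^ 3 + Y) := by
  obtain ⟨f, N₃, hf, hfF, hN₃, w₃, hw₃⟩ := h₃
  obtain ⟨g₂, N₂, hg₂, hg₂X, hN₂, w₂, hw₂⟩ := h₂ f hfF
  obtain ⟨g₁, N₁, hg₁, hg₁Y, hN₁, w₁, hw₁⟩ := h₁ N₂ hN₂
  have := Fin.pos_iff_nonempty.1 hf
  have := Fin.pos_iff_nonempty.1 hg₁
  have := Fin.pos_iff_nonempty.1 hg₂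
  have hblocks : g₁ * g₂ ≤ Y * Y := Nat.mul_le_mul hg₁Y (hg₂X.trans hX)
  refine (IsNestedDS.combine hs hs₂ hw₁ hw₂ hw₃).hasNestedDS
    (Fintype.card_option.trans (by simp)) ?_ ?_
  · calc Fintype.card ((Fin g₁ ×ₗ Fin g₂) ×ₗ Fin f) = g₁ * g₂ * f := by
          simp [Fintype.card_lex]
      _ ≤ Y * Y * Y := Nat.mul_le_mul hblocks (hfF.trans hF)
      _ ≤ Y ^ 3 + Y := by lia
  · calc Nat.card (Fin N₁ ⊕ (Fin g₁ ×ₗ Fin g₂) × Fin N₃) = N₁ + g₁ * g₂ * N₃ := by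
          simp [Fintype.card_lex]
      _ ≤ Y + Y * Y * Y := Nat.add_le_add hN₁ (Nat.mul_le_mul hblocks (hN₃.trans hF))
      _ = Y ^ 3 + Y := by ring

theorem pow_three_add_self_add_three_le (y : ℕ) : y ^ 3 + y + 3 ≤ 2 ^ (y + 3) := by
  rcases lt_or_ge y 4 with hy | hy
  · interval_cases y <;> norm_num
  · induction y, hy using Nat.le_induction with
    | base => norm_num
    | succ y hy ih =>
      have : 3 * y ^ 2 + 3 * y ≤ y ^ 3 + y + 1 := by
        nlinarith [Nat.mul_le_mul_right (y * y) hy]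
      calc (y + 1) ^ 3 + (y + 1) + 3 = y ^ 3 + y + 3 + (3 * y ^ 2 + 3 * y + 2) := by ring
        _ ≤ 2 ^ (y + 3) + 2 ^ (y + 3) := by lia
        _ = 2 ^ (y + 1 + 3) := by ring

theorem pow_three_add_self_le_ack {K : ℕ} (hK : 3 ≤ K) (y : ℕ) : y ^ 3 + y ≤ ack K y :=
  calc y ^ 3 + y ≤ 2 ^ (y + 3) - 3 := Nat.le_sub_of_add_le (pow_three_add_self_add_three_le y)
    _ = ack 3 y := (ack_three y).symm
    _ ≤ ack K y := ack_le_ack hK le_rfl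

theorem three_mul_le_ack_three (y : ℕ) : 3 * y ≤ ack 3 y := by
  rw [ack_three]
  have := Nat.lt_two_pow_self (n := y)
  lia

theorem ack_ack_le {a b c : ℕ} (ha : a + 2 ≤ c) (hb : b + 2 ≤ c) (x : ℕ) :
    ack a (ack b x) ≤ ack c x :=
  (ack_ack_lt_ack_max_add_two a b x).le.trans (ack_le_ack (by lia) le_rfl)

theorem three_mul_ack_three_mul_le {a K : ℕ} (ha : 3 ≤ a) (hK : a + 4 ≤ K) (x : ℕ) :
    3 * ack a (3 * x) ≤ ack K x :=
  calc 3 * ack a (3 * x) ≤ ack 3 (ack a (3 * x)) := three_mul_le_ack_three _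
    _ ≤ ack 3 (ack a (ack 3 x)) := ack_mono_right _ (ack_mono_right _ (three_mul_le_ack_three x))
    _ ≤ ack 3 (ack (a + 2) x) := ack_mono_right _ (ack_ack_le le_rfl (by lia) x)
    _ ≤ ack K x := ack_ack_le (by lia) hK x

theorem hasNestedDS_ack {t c : ℕ} (hc : 3 ≤ c)
    (h : ∀ k m, HasSortedDS (2 * t + 2) (2 ^ k.multichoose t) m (ack (k + c) (3 * m))) (k m : ℕ) :
    HasNestedDS (2 * t + 4) (2 ^ k.multichoose (t + 1)) m (ack (k + c + 5) (3 * m)) := by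
  induction k generalizing m with
  | zero =>
    rw [Nat.multichoose_zero_succ, pow_zero]
    refine (isNestedDS_single (ι := Fin 1) (κ := Fin m) (by lia)).hasNestedDS
      (Fintype.card_fin m) (ack_pos _ _) ?_
    simpa using (by lia : m ≤ 3 * m).trans (lt_ack_right _ _).le
  | succ k ihk =>
    rw [Nat.multichoose_succ_succ, pow_add]
    induction m with
    | zero => exact ⟨1, 0, one_pos, ack_pos _ _, Nat.zero_le _, _, isNestedDS_of_isEmpty _ _ nofun⟩
    | succ m ihm =>
      have hK : k + 1 + c + 5 = k + c + 5 + 1 := by ring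
      rw [hK] at ihm ⊢
      set F := ack (k + c + 5 + 1) (3 * m)
      set X := ack (k + 1 + c) (3 * F)
      set Y := ack (k + c + 5) (3 * X)
      have hFX : F ≤ X := (by lia : F ≤ 3 * F).trans (lt_ack_right _ _).le
      have hXY : X ≤ Y := (by lia : X ≤ 3 * X).trans (lt_ack_right _ _).le
      have hbound : Y ^ 3 + Y ≤ ack (k + c + 5 + 1) (3 * (m + 1)) :=
        calc Y ^ 3 + Y ≤ ack (k + c + 5) Y := pow_three_add_self_le_ack (by lia) Y
          _ ≤ ack (k + c + 5) (ack (k + c + 5) (ack (k + c + 5) F)) := ack_mono_right _ <|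
            ack_mono_right _ (three_mul_ack_three_mul_le (by lia) (by lia) F)
          _ = ack (k + c + 5 + 1) (3 * (m + 1)) := by
            rw [mul_add, ack_succ_succ, ack_succ_succ, ack_succ_succ]
      refine (HasNestedDS.succ (s := 2 * t + 2) (by simp [parity_simps]) (by lia)
        (hFX.trans hXY) hXY (fun N hN => ?_)
        (fun f hf => ?_) ihm).mono hbound
      · exact (ihk N).mono (ack_mono_right _ (by lia))
      · exact (h (k + 1) f).mono (ack_mono_right _ (by lia))

theorem hasSortedDS_trough {k c : ℕ} (m : ℕ) (hc : 3 ≤ c) :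
    HasSortedDS 2 2 m (ack (k + c) (3 * m)) := by
  have := add_lt_ack (k + c) (3 * m)
  exact ⟨2, m, two_pos, by lia, by lia, _, isSortedDS_trough m⟩

theorem exists_hasSortedDS_ack (t : ℕ) : ∃ c, 3 ≤ c ∧
    ∀ k m, HasSortedDS (2 * t + 2) (2 ^ k.multichoose t) m (ack (k + c) (3 * m)) := by
  induction t with
  | zero => exact ⟨3, le_rfl, fun k m => by simpa using hasSortedDS_trough m le_rfl⟩
  | succ t ih =>
    obtain ⟨c, hc, h⟩ := ih
    exact ⟨c + 5, by lia, fun k m => (hasNestedDS_ack hc h k m).hasSortedDS (by positivity)⟩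

theorem le_of_hasSortedDS_one (h : HasSortedDS s μ 1 B) : μ ≤ B := by
  obtain ⟨g, N, hg, hgB, -, w, hw⟩ := h
  have hcard : g = N * μ := by simpa using hw.card_mul_card
  have hN : 0 < N := Nat.pos_of_mul_pos_right (hcard ▸ hg)
  exact (Nat.le_mul_of_pos_left μ hN).trans (hcard ▸ hgB)

/-- As many blocks as letters: take blocks of length `μ`. -/
theorem exists_isSortedDS_le_ack (t : ℕ) : ∃ c, ∀ k, ∃ N, 0 < N ∧ N ≤ ack (k + c) 0 ∧
    ∃ w : Fin N → Fin (2 ^ k.multichoose t) → Fin N,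
      IsSortedDS (2 * t + 2) (2 ^ k.multichoose t) w := by
  obtain ⟨c, hc, h⟩ := exists_hasSortedDS_ack t
  refine ⟨c + 6, fun k => ?_⟩
  set μ := 2 ^ k.multichoose t
  obtain ⟨g, N, hg, -, hN, w, hw⟩ := h k μ
  have hcard := hw.card_mul_card
  simp only [Nat.card_eq_fintype_card, Fintype.card_fin] at hcard
  obtain rfl : g = N := Nat.eq_of_mul_eq_mul_right (by positivity) hcard
  refine ⟨g, hg, ?_, w, hw⟩
  calc g ≤ ack (k + c) (3 * μ) := hN
    _ ≤ ack (k + c) (ack 3 (ack (k + c) 3)) := ack_mono_right _ <|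
      (Nat.mul_le_mul_left 3 (le_of_hasSortedDS_one (h k 1))).trans (three_mul_le_ack_three _)
    _ ≤ ack (k + c) (ack (k + c + 2) 3) := ack_mono_right _ (ack_ack_le (by lia) le_rfl 3)
    _ ≤ ack (k + c + 4) 3 := ack_ack_le (by lia) le_rfl 3
    _ = ack (k + c + 4) (ack 2 0) := by rw [ack_two]
    _ ≤ ack (k + (c + 6)) 0 := ack_ack_le le_rfl (by lia) 0

end Growth

section InverseAckermann

variable {f : ℕ → ℕ}

theorem iterCount_of_le_one (fuel : ℕ) {m : ℕ} (hm : m ≤ 1) : iterCount f fuel m = 0 := by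
  cases fuel with
  | zero => rw [iterCount]
  | succ fuel => rw [iterCount, if_pos hm]

theorem iterCount_le_succ {m b : ℕ} (hb : ∀ fuel, iterCount f fuel (f m) ≤ b) (fuel : ℕ) :
    iterCount f fuel m ≤ b + 1 := by
  cases fuel with
  | zero => exact Nat.zero_le _
  | succ fuel =>
    rw [iterCount, add_comm b]
    split_ifs
    · exact Nat.zero_le _
    · exact Nat.add_le_add_left (hb fuel) 1

theorem iterCount_le_one (hf : ∀ m ≤ 2, f m ≤ 1) {m : ℕ} (hm : m ≤ 2) (fuel : ℕ) :
    iterCount f fuel m ≤ 1 :=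
  iterCount_le_succ (fun fuel => (iterCount_of_le_one fuel (hf m hm)).le) fuel

theorem iterCount_le_two (hf : ∀ m ≤ 2, f m ≤ 1) (hf' : ∀ m ≤ 4, f m ≤ 2) {m : ℕ} (hm : m ≤ 4)
    (fuel : ℕ) : iterCount f fuel m ≤ 2 :=
  iterCount_le_succ (iterCount_le_one hf (hf' m hm)) fuel

theorem alphaHier_le_one (d : ℕ) : ∀ m ≤ 2, alphaHier (d + 1) m ≤ 1 := by
  induction d with
  | zero => intro m hm; rw [alphaHier]; omega
  | succ d ih => intro m hm; rw [alphaHier]; exact iterCount_le_one ih hm m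

theorem alphaHier_le_two (d : ℕ) : ∀ m ≤ 4, alphaHier (d + 1) m ≤ 2 := by
  induction d with
  | zero => intro m hm; rw [alphaHier]; omega
  | succ d ih =>
    intro m hm
    rw [alphaHier]
    exact iterCount_le_two (alphaHier_le_one d) ih hm m

theorem alphaHier_le_of_le_ack (d : ℕ) :
    ∀ x m, m ≤ ack (d + 2) x + 3 → alphaHier (d + 1) m ≤ x + 3 := by
  induction d with
  | zero =>
    intro x m hm
    rw [ack_two] at hm
    rw [alphaHier]
    omega
  | succ d ih =>
    suffices hiter : ∀ x m, m ≤ ack (d + 3) x + 3 →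
        ∀ fuel, iterCount (alphaHier (d + 1)) fuel m ≤ x + 3 by
      intro x m hm
      rw [alphaHier]
      exact hiter x m hm m
    intro x
    induction x with
    | zero =>
      intro m hm
      rw [ack_succ_zero] at hm
      exact iterCount_le_succ
        (iterCount_le_two (alphaHier_le_one d) (alphaHier_le_two d) (ih 1 m hm))
    | succ x ihx =>
      intro m hm
      rw [ack_succ_succ] at hm
      exact iterCount_le_succ (ihx _ (ih _ m hm))

theorem ack_le_of_le_invAck {d n : ℕ} (h : d + 2 ≤ invAck n) : ack (d + 2) 0 ≤ n := by
  by_contra! hlt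
  have hα : alphaHier (d + 1) n ≤ 3 := alphaHier_le_of_le_ack d 0 n (by omega)
  have : invAck n ≤ d + 1 := Nat.sInf_le ⟨by omega, hα⟩
  omega

end InverseAckermann

section Counting

variable {β κ L : Type*} {n : ℕ} {w : β → κ → L} {e : Fin n → L}

theorem eq_of_flatWord_eq (hw : ∀ i, Function.Injective (w i)) {p q : β ×ₗ κ}
    (hblock : (ofLex p).1 = (ofLex q).1) (hletter : flatWord w p = flatWord w q) : p = q := by
  rw [flatWord, flatWord, ← hblock] at hletter
  exact ofLex.injective (Prod.ext hblock (hw _ hletter))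

variable [LinearOrder β]

theorem card_orderHom_le [Finite β] : Nat.card (Fin n →o β) ≤ 2 ^ (Nat.card β + n) := by
  classical
  have := Fintype.ofFinite β
  have hinj : Function.Injective fun f : Fin n →o β =>
      (⟨List.ofFn f, by simp⟩ : Sym β n) := fun f f' h => DFunLike.coe_injective <|
    List.ofFn_injective <| (Multiset.coe_eq_coe.1 (congrArg Subtype.val h)).eq_of_pairwise'
      f.monotone.sortedLE_ofFn.pairwise f'.monotone.sortedLE_ofFn.pairwise
  calc Nat.card (Fin n →o β) ≤ Nat.card (Sym β n) := Nat.card_le_card_of_injective _ hinj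
    _ = (Nat.card β + n - 1).choose n := by
      rw [Nat.card_eq_fintype_card, Sym.card_sym_eq_choose, Nat.card_eq_fintype_card]
    _ ≤ 2 ^ (Nat.card β + n - 1) := Nat.choose_le_two_pow _ _
    _ ≤ 2 ^ (Nat.card β + n) := Nat.pow_le_pow_right two_pos (Nat.sub_le _ _)

theorem exists_perm_lt_iff_lt {x : Fin n → β} (hx : Function.Injective x) :
    ∃ π : Equiv.Perm (Fin n), ∀ c c', π c < π c' ↔ x c < x c' := by
  have hsort : StrictMono (x ∘ Tuple.sort x) :=
    (Tuple.monotone_sort x).strictMono_of_injective (hx.comp (Tuple.sort x).injective)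
  exact ⟨(Tuple.sort x).symm, fun c c' => by simp [← hsort.lt_iff_lt]⟩

variable [LinearOrder κ]

/-- A choice of occurrences of the letters `e c` is determined by the permutation it induces and the
weakly increasing sequence of the blocks it visits. -/
theorem card_pi_occurrences_le [Finite β] (hw : ∀ i, Function.Injective (w i))
    (he : Function.Injective e) :
    Nat.card (∀ c, {p // flatWord w p = e c}) ≤
      (transversalPerms (flatWord w) e).card * 2 ^ (Nat.card β + n) := by
  have hF (F : ∀ c, {p // flatWord w p = e c}) : Function.Injective fun c => (F c).1 :=
    fun c c' h => he <| by rw [← (F c).2, ← (F c').2, show (F c).1 = (F c').1 from h]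
  choose π hπ using fun F => exists_perm_lt_iff_lt (hF F)
  have hmem (F) : π F ∈ transversalPerms (flatWord w) e :=
    mem_transversalPerms.2 ⟨_, fun c => (F c).2, hπ F⟩
  let block (F : ∀ c, {p // flatWord w p = e c}) (c : Fin n) : β := (ofLex (F c).1).1
  have hmono (F) : Monotone (block F ∘ (π F).symm) := fun r r' hr =>
    Prod.Lex.monotone_fst_ofLex <| by
      rw [← not_lt, ← hπ F]
      simpa using hr
  let code (F) : transversalPerms (flatWord w) e × (Fin n →o β) :=
    (⟨π F, hmem F⟩, ⟨block F ∘ (π F).symm, hmono F⟩)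
  have hcode : Function.Injective code := by
    intro F F' h
    have hperm : π F = π F' := congrArg Subtype.val (Prod.ext_iff.1 h).1
    have hblock : block F = block F' := by
      have : block F ∘ (π F).symm = block F' ∘ (π F').symm :=
        congrArg DFunLike.coe (Prod.ext_iff.1 h).2
      rwa [hperm, (π F').symm.surjective.right_cancellable] at this
    exact funext fun c => Subtype.ext <|
      eq_of_flatWord_eq hw (congrFun hblock c) ((F c).2.trans (F' c).2.symm)
  have : Finite (Fin n →o β) := DFunLike.finite _
  calc Nat.card (∀ c, {p // flatWord w p = e c})
      ≤ Nat.card (transversalPerms (flatWord w) e × (Fin n →o β)) :=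
        Nat.card_le_card_of_injective code hcode
    _ = (transversalPerms (flatWord w) e).card * Nat.card (Fin n →o β) := by
        rw [Nat.card_prod, Nat.card_eq_finsetCard]
    _ ≤ _ := Nat.mul_le_mul_left _ card_orderHom_le

theorem IsUniform.exists_vcDimLE {s k N m μ : ℕ} {w : Fin N → Fin m → Fin N} (hw : IsUniform μ w)
    (hds : IsDavenportSchinzel s (flatWord w)) (hN : 0 < N) (hNn : N ≤ n) (hs : 1 ≤ s)
    (hsk : s ≤ k) :
    ∃ P : Finset (Equiv.Perm (Fin n)), VCDimLE n k P ∧ μ ^ n ≤ P.card * 2 ^ (3 * n) := by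
  obtain ⟨Q, hnQ, hQn⟩ : ∃ Q, n ≤ Q * N ∧ Q * N ≤ 2 * n := by
    have hdiv := Nat.div_mul_le_self n N
    have hlt := Nat.lt_div_mul_add (a := n) hN
    exact ⟨n / N + 1, by rw [Nat.succ_mul]; omega, by rw [Nat.succ_mul]; omega⟩
  obtain ⟨e⟩ : Nonempty (Fin n ↪ Fin Q × Fin N) :=
    Function.Embedding.nonempty_of_card_le (by simpa using hnQ)
  let W := replicateWord (Fin Q) w
  have hW : IsUniform μ W := hw.replicate
  refine ⟨transversalPerms (flatWord W) e,
    vcDimLE_transversalPerms (hds.replicate hs) e.injective hsk (hs.trans hsk), ?_⟩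
  have hblocks : Nat.card (Fin Q ×ₗ Fin N) = Q * N := by
    simp [Nat.card_eq_fintype_card, Fintype.card_lex]
  calc μ ^ n = Nat.card (∀ c, {p // flatWord W p = e c}) := by
        simp only [Nat.card_pi, hW.card_fiber, Finset.prod_const, Finset.card_univ,
          Fintype.card_fin]
    _ ≤ (transversalPerms (flatWord W) e).card * 2 ^ (Nat.card (Fin Q ×ₗ Fin N) + n) :=
        card_pi_occurrences_le hW.injective e.injective
    _ ≤ (transversalPerms (flatWord W) e).card * 2 ^ (3 * n) :=
        Nat.mul_le_mul_left _ (Nat.pow_le_pow_right two_pos (by omega))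

end Counting

section LowerBound

theorem exists_vcDimLE_of_add_le_invAck {t k : ℕ} (htk : 2 * t + 2 ≤ k) :
    ∃ c, 0 < c ∧ ∀ n m, m + c ≤ invAck n → ∃ P : Finset (Equiv.Perm (Fin n)),
      VCDimLE n k P ∧ 2 ^ (n * m.multichoose t) ≤ P.card * 2 ^ (3 * n) := by
  obtain ⟨c, hc⟩ := exists_isSortedDS_le_ack t
  refine ⟨c + 2, by omega, fun n m hmn => ?_⟩
  obtain ⟨N, hN, hNack, w, hw⟩ := hc m
  have hNn : N ≤ n := calc
    N ≤ ack (m + c) 0 := hNack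
    _ ≤ ack (m + c + 2) 0 := ack_le_ack (Nat.le_add_right _ _) le_rfl
    _ ≤ n := ack_le_of_le_invAck hmn
  rw [mul_comm n, pow_mul]
  exact hw.exists_vcDimLE hw.isDavenportSchinzel hN hNn (by omega) htk

theorem pow_div_factorial_le_multichoose (m t : ℕ) :
    (m : ℝ) ^ t / (t.factorial : ℝ) ≤ m.multichoose t := by
  have := Nat.pow_le_choose (α := ℝ) t (m + t - 1)
  rw [Nat.multichoose_eq]
  rcases t with - | t
  · simp
  · simpa using this

theorem add_pow_sub_le_pow {x c : ℝ} (hx : 0 ≤ x) (hc : 0 ≤ c) (t : ℕ) :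
    (x + c) ^ t - t * c * (x + c) ^ (t - 1) ≤ x ^ t := by
  have := (le_abs_self _).trans (abs_pow_sub_pow_le (x + c) x t)
  rw [add_sub_cancel_left, abs_of_nonneg hc, abs_of_nonneg hx, abs_of_nonneg (add_nonneg hx hc),
    max_eq_left (le_add_of_nonneg_right hc), mul_comm c] at this
  linarith

theorem one_div_factorial_mul_le {x : ℝ} (hx : 0 ≤ x) (t : ℕ) :
    1 / (t.factorial : ℝ) * x ≤ x :=
  mul_le_of_le_one_left hx <|
    div_le_one_of_le₀ (mod_cast t.factorial_pos) (Nat.cast_nonneg _)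

theorem add_pow_div_factorial_sub_le_multichoose (m c t : ℕ) :
    1 / (t.factorial : ℝ) * ((m + c : ℕ) : ℝ) ^ t - t * c * ((m + c : ℕ) : ℝ) ^ (t - 1)
      ≤ m.multichoose t := by
  push_cast
  set y : ℝ := t * c * (m + c : ℝ) ^ (t - 1)
  calc 1 / (t.factorial : ℝ) * (m + c : ℝ) ^ t - y
      ≤ 1 / (t.factorial : ℝ) * (m + c : ℝ) ^ t - 1 / (t.factorial : ℝ) * y :=
        sub_le_sub_left (one_div_factorial_mul_le (by positivity) t) _
    _ = 1 / (t.factorial : ℝ) * ((m + c : ℝ) ^ t - y) := (mul_sub _ _ _).symm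
    _ ≤ 1 / (t.factorial : ℝ) * (m : ℝ) ^ t := by
        gcongr
        exact add_pow_sub_le_pow m.cast_nonneg c.cast_nonneg t
    _ = (m : ℝ) ^ t / (t.factorial : ℝ) := one_div_mul_eq_div _ _
    _ ≤ m.multichoose t := pow_div_factorial_le_multichoose m t

theorem two_rpow_mul_sub_le {n x a : ℕ} (h : 2 ^ (n * x) ≤ a * 2 ^ (3 * n)) :
    (2 : ℝ) ^ ((n : ℝ) * (x - 3)) ≤ a := by
  have hreal : (2 : ℝ) ^ (n * x) ≤ a * 2 ^ (3 * n) := mod_cast h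
  rw [show (n : ℝ) * (x - 3) = (n * x : ℕ) - (3 * n : ℕ) by push_cast; ring,
    Real.rpow_sub two_pos, Real.rpow_natCast, Real.rpow_natCast]
  exact div_le_of_le_mul₀ (by positivity) a.cast_nonneg hreal

theorem one_div_factorial_mul_pow_sub_nonpos {A c t : ℕ} (hA : A ≤ c) (ht : t ≠ 0) :
    1 / (t.factorial : ℝ) * (A : ℝ) ^ t - (t * c + c + 3) * (A : ℝ) ^ (t - 1) ≤ 0 :=
  sub_nonpos.2 <| calc
    1 / (t.factorial : ℝ) * (A : ℝ) ^ t ≤ (A : ℝ) ^ t := one_div_factorial_mul_le (by positivity) t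
    _ = A * (A : ℝ) ^ (t - 1) := (mul_pow_sub_one ht _).symm
    _ ≤ (t * c + c + 3) * (A : ℝ) ^ (t - 1) := by
      gcongr
      have hAc : (A : ℝ) ≤ c := mod_cast hA
      have htc : (0 : ℝ) ≤ t * c := by positivity
      linarith

theorem one_div_factorial_mul_pow_sub_le_multichoose {m c : ℕ} (hc : 0 < c) (t : ℕ) :
    1 / (t.factorial : ℝ) * ((m + c : ℕ) : ℝ) ^ t - (t * c + c + 3) * ((m + c : ℕ) : ℝ) ^ (t - 1)
      ≤ m.multichoose t - 3 := by
  have hmain := add_pow_div_factorial_sub_le_multichoose m c t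
  have hpow : (1 : ℝ) ≤ ((m + c : ℕ) : ℝ) ^ (t - 1) :=
    one_le_pow₀ (mod_cast hc.trans_le (Nat.le_add_left c m))
  nlinarith [c.cast_nonneg (α := ℝ)]

end LowerBound

/-- For every `k ≥ 4`, with `t = ⌊(k−2)/2⌋`, there is a constant `C_k` such
that for every `n ≥ 1` there is a family of `n`-permutations of size at least
`2 ^ (n·((1/t!)·α(n)^t − C_k·α(n)^(t−1)))` with VC-dimension at most `k`. -/
theorem rk_lower_bound :
    ∀ k : ℕ, 4 ≤ k → ∃ C : ℝ, ∀ n : ℕ, 1 ≤ n →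
      ∃ P : Finset (Equiv.Perm (Fin n)), VCDimLE n k P ∧
        (2 : ℝ) ^ ((n : ℝ) *
          ((1 / (Nat.factorial ((k - 2) / 2) : ℝ)) * (invAck n : ℝ) ^ ((k - 2) / 2)
            - C * (invAck n : ℝ) ^ ((k - 2) / 2 - 1))) ≤ (P.card : ℝ) := by
  intro k hk
  set t := (k - 2) / 2
  obtain ⟨c, hc₀, hc⟩ := exists_vcDimLE_of_add_le_invAck (t := t) (k := k) (by omega)
  refine ⟨t * c + c + 3, fun n _ => ?_⟩
  rcases lt_or_ge (invAck n) c with hsmall | hlarge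
  · refine ⟨{1}, vcDimLE_singleton_one (by omega), ?_⟩
    rw [Finset.card_singleton, Nat.cast_one]
    exact Real.rpow_le_one_of_one_le_of_nonpos one_le_two <|
      mul_nonpos_of_nonneg_of_nonpos n.cast_nonneg <|
        one_div_factorial_mul_pow_sub_nonpos hsmall.le (by omega)
  · obtain ⟨m, hm⟩ := Nat.exists_eq_add_of_le' hlarge
    obtain ⟨P, hP, hcard⟩ := hc n m hm.ge
    refine ⟨P, hP, le_trans ?_ (two_rpow_mul_sub_le hcard)⟩
    rw [hm]
    exact Real.rpow_le_rpow_of_exponent_le one_le_two <|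
      mul_le_mul_of_nonneg_left (one_div_factorial_mul_pow_sub_le_multichoose hc₀ t) n.cast_nonneg
end

section
/- There exists a constant C such that for every integer n ≥ 1, the maximum number p₃(n) of 1-entries in an n×n (0,1)-matrix that is not 4-full satisfies p₃(n) ≤ C·n·α(n). -/
/-!
Let `M` be an `n × n` matrix that is not `4`-full. Then no partition of its rows into four intervals
is met, in all four intervals, by four columns: in such columns one could select the rows of any
permutation. Cut the rows into blocks of `α_d(n)` rows. The columns living in a single block are
handled by recursion on the blocks. An entry in any other column is

* the first entry of its column in its block, and these entries are counted by the matrix with the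
  rows of each block merged, which has about `n / α_d(n)` rows, so that the bound for `d` allows
  `O(n)` of them; or
* the last entry of its column, or the last entry of its column in the first block it meets, which
  makes at most two entries per column; or
* one of the remaining entries, which fall into three classes. For each class there is a partition
  of the rows into four intervals, depending only on the row of the entry, that is met by the column
  of every entry of the class in that row, so a row has at most three entries of each class.

The blocks are again cut into blocks, so this repeats `α_{d+1}(n)` times and gives a bound of the
form `C * n * α_{d+1}(n) + D * n` in which `C` and `D` have grown by constants when passing from `d`
to `d + 1`. After `α(n)` passages `α_d(n) ≤ 3`, and the bound is `O(n * α(n))`.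
-/

namespace ZeroOneMatrix

open Finset

section Entries

variable {ι κ : Type*} {E F : Finset (ι × κ)}

/-- The nonempty rows of the matrix with set of `1`-entries `E`. -/
def rows [DecidableEq ι] (E : Finset (ι × κ)) : Finset ι := E.image Prod.fst

/-- The nonempty columns of the matrix with set of `1`-entries `E`. -/
def cols [DecidableEq κ] (E : Finset (ι × κ)) : Finset κ := E.image Prod.snd

lemma rows_subset_iff [DecidableEq ι] {R : Finset ι} : rows E ⊆ R ↔ ∀ e ∈ E, e.1 ∈ R :=
  image_subset_iff

lemma card_le_card_rows_mul_card_cols [DecidableEq ι] [DecidableEq κ] (E : Finset (ι × κ)) :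
    #E ≤ #(rows E) * #(cols E) := by
  rw [← card_product]
  exact card_le_card subset_product

lemma card_le_card_cols_of_injOn [DecidableEq κ] (hFE : F ⊆ E)
    (hF : Set.InjOn Prod.snd (F : Set (ι × κ))) : #F ≤ #(cols E) :=
  (card_image_of_injOn hF).symm.trans_le (card_le_card (image_subset_image hFE))

end Entries

section Formation

variable {ι ι' κ : Type*} [Preorder ι] [Preorder ι'] {r s : ℕ} {E F : Finset (ι × κ)}

/-- The matrix whose set of `1`-entries (row, column) is `E` has, in column `c`, a `1`-entry in each
of `s` consecutive row intervals. The intervals are encoded as the fibers of a monotone map `g`. -/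
def MeetsIntervals (E : Finset (ι × κ)) (g : ι →o Fin s) (c : κ) : Prop :=
  ∀ i, ∃ x, g x = i ∧ (x, c) ∈ E

/-- The matrix with set of `1`-entries `E` contains no `(r, s)`-formation: for every partition of
the rows into `s` intervals, fewer than `r` columns meet all the intervals. -/
def FormationFree (r s : ℕ) (E : Finset (ι × κ)) : Prop :=
  ∀ (g : ι →o Fin s) (T : Finset κ), (∀ c ∈ T, MeetsIntervals E g c) → #T < r

lemma FormationFree.subset (hE : FormationFree r s E) (hFE : F ⊆ E) : FormationFree r s F :=
  fun g T hT => hE g T fun c hc i => (hT c hc i).imp fun _ hx => ⟨hx.1, hFE hx.2⟩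

/-- The matrix obtained by merging the rows of each fiber of `γ` into a single row. -/
def contract [DecidableEq ι'] [DecidableEq κ] (γ : ι →o ι') (E : Finset (ι × κ)) :
    Finset (ι' × κ) :=
  E.image (Prod.map γ id)

lemma cols_contract [DecidableEq ι'] [DecidableEq κ] (γ : ι →o ι') (E : Finset (ι × κ)) :
    cols (contract γ E) = cols E := by
  simp only [cols, contract, image_image, Function.comp_def, Prod.map_snd, id_eq]

lemma card_contract_of_injective [DecidableEq ι'] [DecidableEq κ] {γ : ι →o ι'}
    (hγ : Function.Injective γ) (E : Finset (ι × κ)) : #(contract γ E) = #E :=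
  card_image_of_injective E (hγ.prodMap Function.injective_id)

lemma FormationFree.contract [DecidableEq ι'] [DecidableEq κ] (hE : FormationFree r s E)
    (γ : ι →o ι') : FormationFree r s (contract γ E) := by
  refine fun g T hT => hE (g.comp γ) T fun c hc i => ?_
  obtain ⟨_, hi, hxE⟩ := hT c hc i
  obtain ⟨⟨x, _⟩, hx, heq⟩ := mem_image.1 hxE
  obtain ⟨rfl, rfl⟩ := Prod.mk.inj heq
  exact ⟨x, hi, hx⟩

lemma FormationFree.card_le_mul_card_rows [DecidableEq ι] (hE : FormationFree r s E) (hFE : F ⊆ E)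
    (hF : ∀ x, ∃ g : ι →o Fin s, ∀ c, (x, c) ∈ F → MeetsIntervals E g c) :
    #F ≤ r * #(rows E) := by
  refine card_le_mul_card_image_of_maps_to (f := Prod.fst)
    (fun e he => mem_image_of_mem _ (hFE he)) r fun x _ => ?_
  classical
  obtain ⟨g, hg⟩ := hF x
  have hinj : Set.InjOn Prod.snd ({e ∈ F | e.1 = x} : Set (ι × κ)) :=
    fun e he e' he' h => Prod.ext (he.2.trans he'.2.symm) h
  rw [← card_image_of_injOn (f := Prod.snd) (by simpa using hinj)]
  refine (hE g _ fun c hc => hg c ?_).le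
  obtain ⟨e, he, rfl⟩ := mem_image.1 hc
  obtain ⟨heF, rfl⟩ := mem_filter.1 he
  exact heF

open Classical in
/-- The partition into four intervals cut out by lower sets `A ≤ B ≤ C`. -/
noncomputable def fourIntervals (A B C : LowerSet ι) : ι →o Fin 4 where
  toFun x := if x ∈ A then 0 else if x ∈ B then 1 else if x ∈ C then 2 else 3
  monotone' x y h := by
    have hA : y ∈ A → x ∈ A := fun hy => A.lower h hy
    have hB : y ∈ B → x ∈ B := fun hy => B.lower h hy
    have hC : y ∈ C → x ∈ C := fun hy => C.lower h hy
    dsimp only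
    split_ifs <;> first | decide | tauto

lemma meetsIntervals_fourIntervals {A B C : LowerSet ι} (hAB : A ≤ B) (hBC : B ≤ C) {c : κ}
    (h₀ : ∃ x ∈ A, (x, c) ∈ E) (h₁ : ∃ x ∈ B, x ∉ A ∧ (x, c) ∈ E)
    (h₂ : ∃ x ∈ C, x ∉ B ∧ (x, c) ∈ E) (h₃ : ∃ x ∉ C, (x, c) ∈ E) :
    MeetsIntervals E (fourIntervals A B C) c := by
  obtain ⟨x₀, hA₀, hE₀⟩ := h₀
  obtain ⟨x₁, hB₁, hA₁, hE₁⟩ := h₁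
  obtain ⟨x₂, hC₂, hB₂, hE₂⟩ := h₂
  obtain ⟨x₃, hC₃, hE₃⟩ := h₃
  have hA₂ : x₂ ∉ A := fun h => hB₂ (hAB h)
  have hB₃ : x₃ ∉ B := fun h => hC₃ (hBC h)
  have hA₃ : x₃ ∉ A := fun h => hB₃ (hAB h)
  simp only [MeetsIntervals, Fin.forall_fin_succ, IsEmpty.forall_iff, and_true]
  exact ⟨⟨x₀, if_pos hA₀, hE₀⟩, ⟨x₁, (if_neg hA₁).trans (if_pos hB₁), hE₁⟩,
    ⟨x₂, (if_neg hA₂).trans <| (if_neg hB₂).trans (if_pos hC₂), hE₂⟩,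
    ⟨x₃, (if_neg hA₃).trans <| (if_neg hB₃).trans (if_neg hC₃), hE₃⟩⟩

end Formation

/-! ### Entries in global columns -/

section Blocks

variable {ι ι' κ : Type*} [LinearOrder ι] [LinearOrder ι'] {r : ℕ} {E F : Finset (ι × κ)}
  {γ : ι →o ι'}

/-- Column `c` has entries in at least two of the row blocks, which are the fibers of `γ`. -/
def IsGlobal (γ : ι →o ι') (E : Finset (ι × κ)) (c : κ) : Prop :=
  ∃ x y, (x, c) ∈ E ∧ (y, c) ∈ E ∧ γ x < γ y

/-- The column of `e` has an entry in a block above that of `e`. -/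
def HasEarlierBlock (γ : ι →o ι') (E : Finset (ι × κ)) (e : ι × κ) : Prop :=
  ∃ x, (x, e.2) ∈ E ∧ γ x < γ e.1

/-- The column of `e` has an entry in a block below that of `e`. -/
def HasLaterBlock (γ : ι →o ι') (E : Finset (ι × κ)) (e : ι × κ) : Prop :=
  ∃ x, (x, e.2) ∈ E ∧ γ e.1 < γ x

/-- The column of `e` has an entry above `e` in the block of `e`. -/
def HasEarlierInBlock (γ : ι →o ι') (E : Finset (ι × κ)) (e : ι × κ) : Prop :=
  ∃ x, (x, e.2) ∈ E ∧ γ x = γ e.1 ∧ x < e.1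

/-- The column of `e` has an entry below `e` in the block of `e`. -/
def HasLaterInBlock (γ : ι →o ι') (E : Finset (ι × κ)) (e : ι × κ) : Prop :=
  ∃ x, (x, e.2) ∈ E ∧ γ x = γ e.1 ∧ e.1 < x

lemma IsGlobal.hasEarlierBlock_or_hasLaterBlock {e : ι × κ} (he : IsGlobal γ E e.2) :
    HasEarlierBlock γ E e ∨ HasLaterBlock γ E e := by
  obtain ⟨x, y, hx, hy, hxy⟩ := he
  rcases lt_or_ge (γ x) (γ e.1) with h | h
  · exact .inl ⟨x, hx, h⟩
  · exact .inr ⟨y, hy, h.trans_lt hxy⟩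

lemma card_le_card_contract_of_not_hasEarlierInBlock [DecidableEq κ] (hFE : F ⊆ E)
    (hF : ∀ e ∈ F, ¬ HasEarlierInBlock γ E e) : #F ≤ #(contract γ E) := by
  refine card_le_card_of_injOn (Prod.map γ id) (fun e he => mem_image_of_mem _ (hFE he)) ?_
  rintro ⟨x, c⟩ hx ⟨y, d⟩ hy h
  obtain ⟨hγ, rfl : c = d⟩ := Prod.mk.inj h
  rcases lt_trichotomy x y with hlt | rfl | hlt
  · exact (hF _ hy ⟨x, hFE hx, hγ, hlt⟩).elim
  · rfl
  · exact (hF _ hx ⟨y, hFE hy, hγ.symm, hlt⟩).elim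

lemma card_le_card_cols_of_forall_not_lt [DecidableEq κ] (hFE : F ⊆ E)
    (hF : ∀ x y c, (x, c) ∈ F → (y, c) ∈ F → ¬ x < y) : #F ≤ #(cols E) := by
  refine card_le_card_cols_of_injOn hFE ?_
  rintro ⟨x, c⟩ hx ⟨y, d⟩ hy (rfl : c = d)
  exact Prod.ext (eq_of_le_of_ge (not_lt.1 (hF y x c hy hx)) (not_lt.1 (hF x y c hx hy))) rfl

lemma card_le_card_cols_of_not_hasLaterBlock [DecidableEq κ] (hFE : F ⊆ E)
    (hF : ∀ e ∈ F, ¬ HasLaterBlock γ E e ∧ ¬ HasLaterInBlock γ E e) : #F ≤ #(cols E) := by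
  refine card_le_card_cols_of_forall_not_lt hFE fun x y c hx hy hxy => ?_
  rcases (γ.monotone hxy.le).lt_or_eq with h | h
  · exact (hF _ hx).1 ⟨y, hFE hy, h⟩
  · exact (hF _ hx).2 ⟨y, hFE hy, h.symm, hxy⟩

lemma card_le_card_cols_of_not_hasEarlierBlock [DecidableEq κ] (hFE : F ⊆ E)
    (hF : ∀ e ∈ F, ¬ HasEarlierBlock γ E e ∧ ¬ HasLaterInBlock γ E e) : #F ≤ #(cols E) := by
  refine card_le_card_cols_of_forall_not_lt hFE fun x y c hx hy hxy => ?_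
  rcases (γ.monotone hxy.le).lt_or_eq with h | h
  · exact (hF _ hy).1 ⟨x, hFE hx, h⟩
  · exact (hF _ hx).2 ⟨y, hFE hy, h.symm, hxy⟩

/-- The rows in blocks strictly above the block of `x`. -/
def blocksBefore (γ : ι →o ι') (x : ι) : LowerSet ι :=
  ⟨{y | γ y < γ x}, fun _ _ h hy => (γ.monotone h).trans_lt hy⟩

/-- The rows in blocks up to and including the block of `x`. -/
def blocksUpTo (γ : ι →o ι') (x : ι) : LowerSet ι :=
  ⟨{y | γ y ≤ γ x}, fun _ _ h hy => (γ.monotone h).trans hy⟩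

lemma blocksBefore_le_Iio (γ : ι →o ι') (x : ι) : blocksBefore γ x ≤ LowerSet.Iio x :=
  fun _ h => γ.monotone.reflect_lt h

lemma Iic_le_blocksUpTo (γ : ι →o ι') (x : ι) : LowerSet.Iic x ≤ blocksUpTo γ x :=
  fun _ h => γ.monotone h

lemma Iio_le_Iic (x : ι) : LowerSet.Iio x ≤ LowerSet.Iic x := fun _ h => le_of_lt h

lemma FormationFree.card_le_of_hasEarlierInBlock (hE : FormationFree r 4 E) (hFE : F ⊆ E)
    (hF : ∀ e ∈ F, HasEarlierBlock γ E e ∧ HasEarlierInBlock γ E e ∧ HasLaterBlock γ E e) :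
    #F ≤ r * #(rows E) := by
  refine hE.card_le_mul_card_rows hFE fun x =>
    ⟨fourIntervals (blocksBefore γ x) (LowerSet.Iio x) (blocksUpTo γ x), fun c hc => ?_⟩
  obtain ⟨⟨y, hyE, hy⟩, ⟨z, hzE, hz, hzx⟩, ⟨w, hwE, hw⟩⟩ := hF _ hc
  exact meetsIntervals_fourIntervals (blocksBefore_le_Iio γ x)
    ((Iio_le_Iic x).trans (Iic_le_blocksUpTo γ x))
    ⟨y, hy, hyE⟩ ⟨z, hzx, hz.not_lt, hzE⟩ ⟨x, le_rfl, lt_irrefl x, hFE hc⟩ ⟨w, hw.not_ge, hwE⟩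

lemma FormationFree.card_le_of_hasLaterBlock (hE : FormationFree r 4 E) (hFE : F ⊆ E)
    (hF : ∀ e ∈ F, HasEarlierInBlock γ E e ∧ HasLaterInBlock γ E e ∧ HasLaterBlock γ E e) :
    #F ≤ r * #(rows E) := by
  refine hE.card_le_mul_card_rows hFE fun x =>
    ⟨fourIntervals (LowerSet.Iio x) (LowerSet.Iic x) (blocksUpTo γ x), fun c hc => ?_⟩
  obtain ⟨⟨y, hyE, -, hyx⟩, ⟨z, hzE, hz, hxz⟩, ⟨w, hwE, hw⟩⟩ := hF _ hc
  exact meetsIntervals_fourIntervals (Iio_le_Iic x) (Iic_le_blocksUpTo γ x)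
    ⟨y, hyx, hyE⟩ ⟨x, le_rfl, lt_irrefl x, hFE hc⟩ ⟨z, hz.le, hxz.not_ge, hzE⟩ ⟨w, hw.not_ge, hwE⟩

lemma FormationFree.card_le_of_hasEarlierBlock (hE : FormationFree r 4 E) (hFE : F ⊆ E)
    (hF : ∀ e ∈ F, HasEarlierBlock γ E e ∧ HasEarlierInBlock γ E e ∧ HasLaterInBlock γ E e) :
    #F ≤ r * #(rows E) := by
  refine hE.card_le_mul_card_rows hFE fun x =>
    ⟨fourIntervals (blocksBefore γ x) (LowerSet.Iio x) (LowerSet.Iic x), fun c hc => ?_⟩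
  obtain ⟨⟨y, hyE, hy⟩, ⟨z, hzE, hz, hzx⟩, ⟨w, hwE, -, hxw⟩⟩ := hF _ hc
  exact meetsIntervals_fourIntervals (blocksBefore_le_Iio γ x) (Iio_le_Iic x)
    ⟨y, hy, hyE⟩ ⟨z, hzx, hz.not_lt, hzE⟩ ⟨x, le_rfl, lt_irrefl x, hFE hc⟩ ⟨w, hxw.not_ge, hwE⟩

open Classical in
lemma subset_union_of_forall_isGlobal [DecidableEq κ] (hγ : ∀ e ∈ E, IsGlobal γ E e.2) :
    E ⊆ {e ∈ E | ¬ HasEarlierInBlock γ E e} ∪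
      ({e ∈ E | HasEarlierBlock γ E e ∧ HasEarlierInBlock γ E e ∧ HasLaterBlock γ E e} ∪
      ({e ∈ E | HasEarlierInBlock γ E e ∧ HasLaterInBlock γ E e ∧ HasLaterBlock γ E e} ∪
      ({e ∈ E | HasEarlierBlock γ E e ∧ HasEarlierInBlock γ E e ∧ HasLaterInBlock γ E e} ∪
      ({e ∈ E | ¬ HasLaterBlock γ E e ∧ ¬ HasLaterInBlock γ E e} ∪
        {e ∈ E | ¬ HasEarlierBlock γ E e ∧ ¬ HasLaterInBlock γ E e})))) := by
  intro e he
  have hblock := (hγ e he).hasEarlierBlock_or_hasLaterBlock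
  simp only [mem_union, mem_filter, he, true_and]
  tauto

lemma FormationFree.card_le_card_contract_add [DecidableEq κ] (hE : FormationFree r 4 E)
    (hγ : ∀ e ∈ E, IsGlobal γ E e.2) :
    #E ≤ #(ZeroOneMatrix.contract γ E) + 3 * r * #(rows E) + 2 * #(cols E) := by
  classical
  have hcover := card_le_card (subset_union_of_forall_isGlobal hγ)
  grw [card_union_le, card_union_le, card_union_le, card_union_le, card_union_le,
    card_le_card_contract_of_not_hasEarlierInBlock (filter_subset _ _)
      fun e he => (mem_filter.1 he).2,
    hE.card_le_of_hasEarlierInBlock (filter_subset _ _) fun e he => (mem_filter.1 he).2,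
    hE.card_le_of_hasLaterBlock (filter_subset _ _) fun e he => (mem_filter.1 he).2,
    hE.card_le_of_hasEarlierBlock (filter_subset _ _) fun e he => (mem_filter.1 he).2,
    card_le_card_cols_of_not_hasLaterBlock (filter_subset _ _) fun e he => (mem_filter.1 he).2,
    card_le_card_cols_of_not_hasEarlierBlock (filter_subset _ _)
      fun e he => (mem_filter.1 he).2] at hcover
  linarith

open Classical in
/-- The entries of `E` in its global columns. -/
noncomputable def globalPart (γ : ι →o ι') (E : Finset (ι × κ)) : Finset (ι × κ) :=
  {e ∈ E | IsGlobal γ E e.2}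

open Classical in
/-- The entries of `E` in its columns that live in a single block. -/
noncomputable def localPart (γ : ι →o ι') (E : Finset (ι × κ)) : Finset (ι × κ) :=
  {e ∈ E | ¬ IsGlobal γ E e.2}

lemma mem_globalPart {e : ι × κ} : e ∈ globalPart γ E ↔ e ∈ E ∧ IsGlobal γ E e.2 := by
  classical exact mem_filter

lemma mem_localPart {e : ι × κ} : e ∈ localPart γ E ↔ e ∈ E ∧ ¬ IsGlobal γ E e.2 := by
  classical exact mem_filter

lemma globalPart_subset (γ : ι →o ι') (E : Finset (ι × κ)) : globalPart γ E ⊆ E :=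
  fun _ he => (mem_globalPart.1 he).1

lemma localPart_subset (γ : ι →o ι') (E : Finset (ι × κ)) : localPart γ E ⊆ E :=
  fun _ he => (mem_localPart.1 he).1

lemma card_globalPart_add_card_localPart (γ : ι →o ι') (E : Finset (ι × κ)) :
    #(globalPart γ E) + #(localPart γ E) = #E := by
  classical exact card_filter_add_card_filter_not _

lemma card_cols_globalPart_add_card_cols_localPart [DecidableEq κ] (γ : ι →o ι')
    (E : Finset (ι × κ)) :
    #(cols (globalPart γ E)) + #(cols (localPart γ E)) = #(cols E) := by
  classical
  rw [cols, cols, globalPart, localPart, ← filter_image (p := IsGlobal γ E),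
    ← filter_image (p := fun c => ¬ IsGlobal γ E c)]
  exact card_filter_add_card_filter_not _

lemma isGlobal_globalPart {e : ι × κ} (he : e ∈ globalPart γ E) :
    IsGlobal γ (globalPart γ E) e.2 := by
  have hglobal := (mem_globalPart.1 he).2
  have ⟨x, y, hx, hy, hxy⟩ := hglobal
  exact ⟨x, y, mem_globalPart.2 ⟨hx, hglobal⟩, mem_globalPart.2 ⟨hy, hglobal⟩, hxy⟩

lemma not_isGlobal_localPart (γ : ι →o ι') (E : Finset (ι × κ)) (c : κ) :
    ¬ IsGlobal γ (localPart γ E) c := by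
  rintro ⟨x, y, hx, hy, hxy⟩
  obtain ⟨hxE, hlocal⟩ := mem_localPart.1 hx
  exact hlocal ⟨x, y, hxE, localPart_subset γ E hy, hxy⟩

/-- The entries of `E` in the block with index `i`. -/
def block (γ : ι →o ι') (E : Finset (ι × κ)) (i : ι') : Finset (ι × κ) :=
  {e ∈ E | γ e.1 = i}

lemma sum_card_cols_block_le [DecidableEq κ] (hγ : ∀ c, ¬ IsGlobal γ E c) (I : Finset ι') :
    ∑ i ∈ I, #(cols (block γ E i)) ≤ #(cols E) := by
  rw [← card_biUnion]
  · exact card_le_card (biUnion_subset.2 fun i _ => image_subset_image (filter_subset _ _))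
  · refine fun i _ j _ hij => disjoint_left.2 fun c hi hj => ?_
    obtain ⟨⟨x, _⟩, hx, rfl⟩ := mem_image.1 hi
    obtain ⟨⟨y, d⟩, hy, rfl : d = _⟩ := mem_image.1 hj
    obtain ⟨hxE, rfl⟩ := mem_filter.1 hx
    obtain ⟨hyE, rfl⟩ := mem_filter.1 hy
    rcases hij.lt_or_gt with h | h
    · exact hγ d ⟨x, y, hxE, hyE, h⟩
    · exact hγ d ⟨y, x, hyE, hxE, h⟩

lemma card_le_of_forall_card_block_le [DecidableEq κ] (hγ : ∀ c, ¬ IsGlobal γ E c)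
    {I : Finset ι'} (hI : ∀ e ∈ E, γ e.1 ∈ I) {b : ι' → ℕ} {D : ℕ}
    (hb : ∀ i ∈ I, #(block γ E i) ≤ b i + D * #(cols (block γ E i))) :
    #E ≤ ∑ i ∈ I, b i + D * #(cols E) :=
  calc #E = ∑ i ∈ I, #(block γ E i) := card_eq_sum_card_fiberwise hI
    _ ≤ ∑ i ∈ I, (b i + D * #(cols (block γ E i))) := sum_le_sum hb
    _ = ∑ i ∈ I, b i + D * ∑ i ∈ I, #(cols (block γ E i)) := by
      rw [sum_add_distrib, ← mul_sum]
    _ ≤ ∑ i ∈ I, b i + D * #(cols E) := by grw [sum_card_cols_block_le hγ]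

end Blocks

/-! ### The recursion -/

section Recursion

variable {κ : Type*} {r w N N' D D' : ℕ} {E : Finset (ℕ × κ)}

lemma card_rows_le {a : ℕ} (hrows : rows E ⊆ Icc a (a + w)) : #(rows E) ≤ w + 1 := by
  grw [hrows, Nat.card_Icc]
  omega

/-- Splits the rows from row `a` on into consecutive blocks of `t` rows. -/
def blockIndex (a t : ℕ) : ℕ →o ℕ :=
  ⟨fun x => (x - a) / t, fun _ _ h => Nat.div_le_div_right (Nat.sub_le_sub_right h a)⟩

lemma blockIndex_le {a x : ℕ} (t : ℕ) (hx : x ∈ Icc a (a + w)) : blockIndex a t x ≤ w / t :=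
  Nat.div_le_div_right (Nat.sub_le_iff_le_add'.2 (mem_Icc.1 hx).2)

lemma rows_block_blockIndex_subset {a t : ℕ} (ht : 0 < t) (hrows : rows E ⊆ Icc a (a + w))
    (i : ℕ) :
    rows (block (blockIndex a t) E i) ⊆
      Icc (a + i * t) (a + i * t + min (t - 1) (w - i * t)) := by
  refine rows_subset_iff.2 fun e he => ?_
  obtain ⟨heE, hi⟩ := mem_filter.1 he
  obtain ⟨hlow, hhigh⟩ := mem_Icc.1 (rows_subset_iff.1 hrows e heE)
  obtain ⟨hstart, hend⟩ := (Nat.div_eq_iff ht).1 hi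
  rw [mem_Icc]
  omega

lemma sum_min_add_sub_le (t w k : ℕ) :
    ∑ i ∈ range k, min (t - 1) (w - i * t) + (w - k * t) ≤ w := by
  induction k with
  | zero => simp
  | succ k ih =>
    rw [sum_range_succ, Nat.succ_mul]
    omega

variable [DecidableEq κ]

/-- A matrix without `(r, 4)`-formation that has `w + 1` rows and `c` nonempty columns has at most
`N + D * c` entries. The rows may be any `w + 1` consecutive ones, so that the bound applies to a
block of rows of a larger matrix. The parameter is `w` rather than the number of rows so that
bounds proportional to it, with value `0` for single rows, can be added over blocks. -/
def HasFormationBound (κ : Type*) [DecidableEq κ] (r w N D : ℕ) : Prop :=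
  ∀ (a : ℕ) (E : Finset (ℕ × κ)), FormationFree r 4 E → rows E ⊆ Icc a (a + w) →
    #E ≤ N + D * #(cols E)

lemma HasFormationBound.mono (h : HasFormationBound κ r w N D) (hN : N ≤ N') (hD : D ≤ D') :
    HasFormationBound κ r w N' D' := fun a E hE hrows => by
  grw [h a E hE hrows, hN, hD]

lemma hasFormationBound_rows (κ : Type*) [DecidableEq κ] (r w : ℕ) :
    HasFormationBound κ r w 0 (w + 1) := fun a E _ hrows => by
  grw [card_le_card_rows_mul_card_cols, card_rows_le hrows, zero_add]

lemma rows_contract_blockIndex_subset {a : ℕ} (t : ℕ) (hrows : rows E ⊆ Icc a (a + w)) :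
    rows (contract (blockIndex a t) E) ⊆ Icc 0 (0 + w / t) := by
  refine rows_subset_iff.2 fun e he => ?_
  obtain ⟨e, heE, rfl⟩ := mem_image.1 he
  simpa using blockIndex_le t (rows_subset_iff.1 hrows e heE)

lemma FormationFree.card_le_of_forall_not_isGlobal {a t L : ℕ} (hE : FormationFree r 4 E)
    (ht : 0 < t) (hrows : rows E ⊆ Icc a (a + w)) (hlocal : ∀ c, ¬ IsGlobal (blockIndex a t) E c)
    (hbound : ∀ v < t, HasFormationBound κ r v (v * L) D) :
    #E ≤ w * L + D * #(cols E) := by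
  have hindex : ∀ e ∈ E, blockIndex a t e.1 ∈ range (w / t + 1) := fun e he =>
    mem_range_succ_iff.2 (blockIndex_le t (rows_subset_iff.1 hrows e he))
  have hblock : ∀ i ∈ range (w / t + 1), #(block (blockIndex a t) E i) ≤
      min (t - 1) (w - i * t) * L + D * #(cols (block (blockIndex a t) E i)) := fun i _ =>
    hbound _ (by omega) (a + i * t) _ (hE.subset (filter_subset _ _))
      (rows_block_blockIndex_subset ht hrows i)
  have hwidth : ∑ i ∈ range (w / t + 1), min (t - 1) (w - i * t) ≤ w :=
    le_of_add_le_left (sum_min_add_sub_le t w (w / t + 1))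
  grw [card_le_of_forall_card_block_le hlocal hindex hblock, ← sum_mul, hwidth]

lemma HasFormationBound.of_blocks {t L : ℕ} (ht : 0 < t)
    (hglobal : HasFormationBound κ r (w / t) N D)
    (hlocal : ∀ v < t, HasFormationBound κ r v (v * L) (D + 2)) :
    HasFormationBound κ r w (N + 3 * r * (w + 1) + w * L) (D + 2) := by
  intro a E hE hrows
  set G := globalPart (blockIndex a t) E
  set F := localPart (blockIndex a t) E
  have hrowsG : rows G ⊆ Icc a (a + w) :=
    (image_subset_image (globalPart_subset _ _)).trans hrows
  have hrowsF : rows F ⊆ Icc a (a + w) :=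
    (image_subset_image (localPart_subset _ _)).trans hrows
  have hfreeG : FormationFree r 4 G := hE.subset (globalPart_subset _ _)
  have hcontract : #(contract (blockIndex a t) G) ≤ N + D * #(cols G) := by
    simpa only [cols_contract] using
      hglobal 0 _ (hfreeG.contract _) (rows_contract_blockIndex_subset t hrowsG)
  have hcardG : #G ≤ N + 3 * r * (w + 1) + (D + 2) * #(cols G) := by
    grw [hfreeG.card_le_card_contract_add fun e => isGlobal_globalPart, hcontract,
      card_rows_le hrowsG]
    linarith
  have hcardF : #F ≤ w * L + (D + 2) * #(cols F) :=
    (hE.subset (localPart_subset _ _)).card_le_of_forall_not_isGlobal ht hrowsF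
      (not_isGlobal_localPart _ _) hlocal
  calc #E = #G + #F := (card_globalPart_add_card_localPart _ _).symm
    _ ≤ N + 3 * r * (w + 1) + w * L + (D + 2) * (#(cols G) + #(cols F)) := by linarith
    _ = N + 3 * r * (w + 1) + w * L + (D + 2) * #(cols E) := by
      rw [card_cols_globalPart_add_card_cols_localPart]

lemma hasFormationBound_of_recursion {f h : ℕ → ℕ} {C : ℕ} (hf_pos : ∀ m, 2 ≤ m → 0 < f m)
    (hf_lt : ∀ m, 2 ≤ m → f m < m) (hh_mono : Monotone h)
    (hh : ∀ m, 2 ≤ m → h m = 1 + h (f m))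
    (hglobal : ∀ w, 0 < w → HasFormationBound κ r (w / f (w + 1)) (C * w) D) (w : ℕ) :
    HasFormationBound κ r w ((C + 6 * r) * (w * h (w + 1))) (D + 2) := by
  induction w using Nat.strong_induction_on with
  | _ w ih =>
    rcases w.eq_zero_or_pos with rfl | hw
    · exact (hasFormationBound_rows κ r 0).mono (Nat.zero_le _) (by omega)
    have hlt := hf_lt (w + 1) (by omega)
    have hlocal : ∀ v < f (w + 1),
        HasFormationBound κ r v (v * ((C + 6 * r) * h (f (w + 1)))) (D + 2) := fun v hv => by
      refine (ih v (by omega)).mono ?_ le_rfl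
      rw [mul_left_comm]
      gcongr
      exact hh_mono hv
    refine (HasFormationBound.of_blocks (hf_pos _ (by omega)) (hglobal w hw) hlocal).mono ?_ le_rfl
    calc C * w + 3 * r * (w + 1) + w * ((C + 6 * r) * h (f (w + 1)))
        ≤ C * w + 3 * r * (w + w) + w * ((C + 6 * r) * h (f (w + 1))) := by gcongr; exact hw
      _ = (C + 6 * r) * (w * h (w + 1)) := by rw [hh (w + 1) (by omega)]; ring

end Recursion

/-! ### The inverse Ackermann hierarchy -/

section InverseAckermann

variable {f : ℕ → ℕ}

lemma iterCount_of_le_one (f : ℕ → ℕ) (k : ℕ) {m : ℕ} (hm : m ≤ 1) : iterCount f k m = 0 := by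
  cases k with
  | zero => rfl
  | succ k => exact if_pos hm

lemma iterCount_eq_of_le_fuel (hf : ∀ m, 2 ≤ m → f m < m) {k m : ℕ} (hmk : m ≤ k) :
    iterCount f k m = iterCount f m m := by
  induction k using Nat.strong_induction_on generalizing m with
  | _ k ih =>
    rcases Nat.lt_or_ge m 2 with hm | hm
    · rw [iterCount_of_le_one f k (by omega), iterCount_of_le_one f m (by omega)]
    rcases hmk.eq_or_lt with rfl | hlt
    · rfl
    obtain ⟨k, rfl⟩ : ∃ j, k = j + 1 := ⟨k - 1, by omega⟩
    obtain ⟨m, rfl⟩ : ∃ j, m = j + 1 := ⟨m - 1, by omega⟩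
    have hfm := hf (m + 1) hm
    rw [iterCount, iterCount, ih k (by omega) (by omega), ih m (by omega) (by omega)]

lemma iterCount_eq_one_add (hf : ∀ m, 2 ≤ m → f m < m) {m : ℕ} (hm : 2 ≤ m) :
    iterCount f m m = 1 + iterCount f (f m) (f m) := by
  obtain ⟨k, rfl⟩ : ∃ j, m = j + 1 := ⟨m - 1, by omega⟩
  have hfm := hf (k + 1) hm
  rw [iterCount, if_neg (by omega), iterCount_eq_of_le_fuel hf (by omega)]

lemma iterCount_le_sub_one (hf : ∀ m, 2 ≤ m → f m < m) (m : ℕ) : iterCount f m m ≤ m - 1 := by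
  induction m using Nat.strong_induction_on with
  | _ m ih =>
    rcases Nat.lt_or_ge m 2 with hm | hm
    · rw [iterCount_of_le_one f m (by omega)]
      exact Nat.zero_le _
    · have hfm := hf m hm
      have hle := ih (f m) hfm
      rw [iterCount_eq_one_add hf hm]
      omega

lemma monotone_iterCount (hf : ∀ m, 2 ≤ m → f m < m) (hf_mono : Monotone f) :
    Monotone fun m => iterCount f m m := by
  intro m n hmn
  induction n using Nat.strong_induction_on generalizing m with
  | _ n ih =>
    dsimp only at ih ⊢
    rcases Nat.lt_or_ge m 2 with hm | hm
    · rw [iterCount_of_le_one f m (by omega)]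
      exact Nat.zero_le _
    · rw [iterCount_eq_one_add hf hm, iterCount_eq_one_add hf (hm.trans hmn)]
      gcongr
      exact ih (f n) (hf n (hm.trans hmn)) (hf_mono hmn)

lemma alphaHier_lt (d : ℕ) {m : ℕ} (hm : 2 ≤ m) : alphaHier (d + 1) m < m := by
  induction d generalizing m with
  | zero =>
    rw [alphaHier]
    omega
  | succ d ih =>
    have hle := iterCount_le_sub_one (fun _ => ih) m
    rw [alphaHier]
    omega

lemma alphaHier_le_sub_one (d m : ℕ) : alphaHier (d + 2) m ≤ m - 1 :=
  iterCount_le_sub_one (fun _ => alphaHier_lt d) m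

lemma alphaHier_eq_one_add (d : ℕ) {m : ℕ} (hm : 2 ≤ m) :
    alphaHier (d + 2) m = 1 + alphaHier (d + 2) (alphaHier (d + 1) m) :=
  iterCount_eq_one_add (fun _ => alphaHier_lt d) hm

lemma alphaHier_pos (d : ℕ) {m : ℕ} (hm : 2 ≤ m) : 0 < alphaHier (d + 1) m := by
  cases d with
  | zero =>
    rw [alphaHier]
    omega
  | succ d =>
    rw [alphaHier_eq_one_add d hm]
    omega

lemma monotone_alphaHier (d : ℕ) : Monotone (alphaHier (d + 1)) := by
  induction d with
  | zero =>
    intro m n hmn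
    simp only [alphaHier]
    omega
  | succ d ih => exact monotone_iterCount (fun _ => alphaHier_lt d) ih

lemma alphaHier_succ_le (d m : ℕ) : alphaHier (d + 2) m ≤ alphaHier (d + 1) m := by
  rcases Nat.lt_or_ge m 2 with hm | hm
  · have hle := alphaHier_le_sub_one d m
    omega
  · have hpos := alphaHier_pos d hm
    have hle := alphaHier_le_sub_one d (alphaHier (d + 1) m)
    rw [alphaHier_eq_one_add d hm]
    omega

lemma alphaHier_add_two_le (d : ℕ) {m : ℕ} (hm : 4 ≤ m) : alphaHier (d + 1) m + 2 ≤ m := by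
  induction d with
  | zero =>
    rw [alphaHier]
    omega
  | succ d ih => exact (Nat.add_le_add_right (alphaHier_succ_le d m) 2).trans ih

lemma alphaHier_succ_lt (d : ℕ) {m : ℕ} (hm : 4 ≤ alphaHier (d + 1) m) :
    alphaHier (d + 2) m < alphaHier (d + 1) m := by
  have hm2 : 2 ≤ m := by
    by_contra hlt
    have hle := monotone_alphaHier d (show m ≤ 2 by omega)
    have hlt_two := alphaHier_lt d (le_refl 2)
    omega
  have hle : alphaHier (d + 2) (alphaHier (d + 1) m) + 2 ≤ alphaHier (d + 1) m :=
    alphaHier_add_two_le (d + 1) hm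
  rw [alphaHier_eq_one_add d hm2]
  omega

lemma alphaHier_le_max (d m : ℕ) : alphaHier (d + 1) m ≤ max 3 (m - d) := by
  induction d with
  | zero =>
    rw [alphaHier]
    omega
  | succ d ih =>
    rcases Nat.lt_or_ge (alphaHier (d + 1) m) 4 with hm | hm
    · exact (alphaHier_succ_le d m).trans (by omega)
    · exact (Nat.le_sub_one_of_lt (alphaHier_succ_lt d hm)).trans (by omega)

lemma invAck_mem (m : ℕ) : invAck m ∈ {k | 1 ≤ k ∧ alphaHier k m ≤ 3} :=
  Nat.sInf_mem ⟨m + 1, m.succ_pos, (alphaHier_le_max m m).trans (by simp)⟩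

lemma alphaHier_invAck_succ_le (m : ℕ) : alphaHier (invAck m + 1) m ≤ 3 := by
  obtain ⟨hpos, hle⟩ := invAck_mem m
  obtain ⟨d, hd⟩ := Nat.exists_eq_add_of_le' hpos
  rw [hd] at hle ⊢
  exact (alphaHier_succ_le d m).trans hle

end InverseAckermann

lemma hasFormationBound_alphaHier (κ : Type*) [DecidableEq κ] (r d w : ℕ) :
    HasFormationBound κ r w (6 * r * (d + 1) * (w * alphaHier (d + 2) (w + 1)))
      (2 * (d + 2)) := by
  induction d generalizing w with
  | zero =>
    have hglobal : ∀ w, 0 < w → HasFormationBound κ r (w / alphaHier 1 (w + 1)) (0 * w) 2 := by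
      intro w _
      have hblocks : w / alphaHier 1 (w + 1) < 2 := by
        rw [alphaHier, Nat.div_lt_iff_lt_mul (by omega)]
        omega
      exact (hasFormationBound_rows κ r _).mono (Nat.zero_le _) (by omega)
    simpa using hasFormationBound_of_recursion (fun _ => alphaHier_pos 0) (fun _ => alphaHier_lt 0)
      (monotone_alphaHier 1) (fun _ => alphaHier_eq_one_add 0) hglobal w
  | succ d ih =>
    have hglobal : ∀ w, 0 < w → HasFormationBound κ r (w / alphaHier (d + 2) (w + 1))
        (6 * r * (d + 1) * w) (2 * (d + 2)) := by
      intro w _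
      refine (ih _).mono (Nat.mul_le_mul_left _ ?_) le_rfl
      grw [monotone_alphaHier (d + 1) (Nat.succ_le_succ (Nat.div_le_self _ _)),
        Nat.div_mul_le_self]
    exact (hasFormationBound_of_recursion (fun _ => alphaHier_pos (d + 1))
      (fun _ => alphaHier_lt (d + 1)) (monotone_alphaHier (d + 2))
      (fun _ => alphaHier_eq_one_add (d + 1)) hglobal w).mono (le_of_eq (by ring)) (by omega)

lemma FormationFree.card_le_mul_invAck {κ : Type*} [DecidableEq κ] {r n : ℕ}
    {E : Finset (ℕ × κ)} (hE : FormationFree r 4 E) (hrows : rows E ⊆ range n) :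
    #E ≤ (18 * r * n + 4 * #(cols E)) * invAck n := by
  rcases n with _ | w
  · have hnil : rows E = ∅ := by simpa only [range_zero, subset_empty] using hrows
    grw [card_le_card_rows_mul_card_cols, hnil, card_empty, zero_mul]
    exact Nat.zero_le _
  obtain ⟨d, hd⟩ : ∃ d, invAck (w + 1) = d + 1 := Nat.exists_eq_add_of_le' (invAck_mem _).1
  have hthree : alphaHier (d + 2) (w + 1) ≤ 3 := by
    simpa only [hd] using alphaHier_invAck_succ_le (w + 1)
  have hIcc : rows E ⊆ Icc 0 (0 + w) := hrows.trans fun x hx => by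
    simpa [Nat.lt_succ_iff] using hx
  grw [hasFormationBound_alphaHier κ r d w 0 E hE hIcc, hthree, hd]
  calc 6 * r * (d + 1) * (w * 3) + 2 * (d + 2) * #(cols E)
      ≤ 6 * r * (d + 1) * ((w + 1) * 3) + 2 * (2 * (d + 1)) * #(cols E) := by
        gcongr <;> omega
    _ = (18 * r * (w + 1) + 4 * #(cols E)) * (d + 1) := by ring

/-! ### Matrices -/

section Matrices

variable {m n k : ℕ}

/-- The positions of the `1`-entries of `M`. -/
def entries (M : Fin m → Fin n → Bool) : Finset (Fin m × Fin n) := {p | M p.1 p.2 = true}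

lemma mem_entries {M : Fin m → Fin n → Bool} {p : Fin m × Fin n} :
    p ∈ entries M ↔ M p.1 p.2 = true :=
  mem_filter_univ p

lemma card_entries (M : Fin m → Fin n → Bool) : #(entries M) = matOnes M := by
  rw [matOnes, Nat.card_eq_fintype_card, Fintype.card_subtype, entries]

lemma formationFree_entries {M : Fin n → Fin n → Bool} (hM : ¬ IsFull k M) :
    FormationFree k k (entries M) := by
  intro g T hT
  by_contra! hcard
  obtain ⟨S, hST, hS⟩ := exists_subset_card_eq hcard
  choose x hgx hx using fun b => hT _ (hST (S.orderEmbOfFin_mem hS b))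
  refine hM ⟨S.orderEmbOfFin hS, (S.orderEmbOfFin hS).strictMono, fun σ =>
    ⟨fun i => x (σ.symm i) i, fun i j hij => ?_, fun b => ?_⟩⟩
  · exact g.monotone.reflect_lt (by simpa only [hgx] using hij)
  · simpa only [σ.symm_apply_apply] using mem_entries.1 (hx b (σ b))

lemma matOnes_le_mul_invAck {r : ℕ} {M : Fin m → Fin n → Bool}
    (hM : FormationFree r 4 (entries M)) : matOnes M ≤ (18 * r * m + 4 * n) * invAck m := by
  have hrows : rows (contract (Fin.valOrderEmb m).toOrderHom (entries M)) ⊆ range m := by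
    refine rows_subset_iff.2 fun e he => ?_
    obtain ⟨p, -, rfl⟩ := mem_image.1 he
    exact mem_range.2 p.1.isLt
  calc matOnes M = #(contract (Fin.valOrderEmb m).toOrderHom (entries M)) := by
        rw [card_contract_of_injective Fin.val_injective, card_entries]
    _ ≤ (18 * r * m + 4 * #(cols (entries M))) * invAck m := by
        simpa only [cols_contract] using (hM.contract _).card_le_mul_invAck hrows
    _ ≤ (18 * r * m + 4 * n) * invAck m := by grw [card_le_univ, Fintype.card_fin]

end Matrices

end ZeroOneMatrix

/-- There is a constant `C` such that for every `n ≥ 1`,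
`p₃(n) ≤ C·n·α(n)`. -/
theorem p3_upper_bound :
    ∃ C : ℝ, ∀ n : ℕ, 1 ≤ n → (pFull 3 n : ℝ) ≤ C * (n : ℝ) * (invAck n : ℝ) := by
  refine ⟨76, fun n _ => ?_⟩
  have hbound : pFull 3 n ≤ 76 * n * invAck n := by
    refine csSup_le' ?_
    rintro _ ⟨M, hM, rfl⟩
    calc matOnes M ≤ (18 * 4 * n + 4 * n) * invAck n :=
          ZeroOneMatrix.matOnes_le_mul_invAck (ZeroOneMatrix.formationFree_entries hM)
      _ = 76 * n * invAck n := by ring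
  exact_mod_cast hbound
end

section
/- For every fixed even integer k ≥ 4, with t := ⌊(k−2)/2⌋ = (k−2)/2, there exists a constant C_k such that for every integer n ≥ 1, the maximum number p_k(n) of 1-entries in an n×n (0,1)-matrix that is not (k+1)-full satisfies p_k(n) ≤ n·2^{(1/t!)·α(n)^t + C_k·α(n)^{t−1}}. -/
/-!
If `k + 1` columns all meet each of `k + 1` consecutive intervals of rows, their `1`-entries can be
picked one per interval in any prescribed order of the columns. Hence the columns of a matrix that
is not `(k + 1)`-full contain no `(k + 1, k + 1)`-formation, and neither do the pieces of `q + 1`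
consecutive `1`-entries into which the columns can be cut. It remains to find a small height `q`
above which the number of columns without formation is linear in the number of rows.

For this, cut the rows into blocks. Contracting every block to a point bounds the number of columns
that meet more than `q₀` blocks. Every other column is heavy inside a single block; where it
continues beyond that block on one side (on both sides), its restrictions to the block avoid
formations with one interval fewer (two intervals fewer), and induction applies with heights `q₁`
and `q₂`. The total height is `q = 2 * q₁ + q₂ * q₀`. For blocks of Ackermann size only `α(n)`
levels of contraction are needed, and the logarithm of the dominant term `q₂ * q₀` satisfies
Pascal's rule, so that `log₂ q` is bounded by a binomial coefficient `(α(n) + O(1)).choose t`,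
where `t = (k - 2) / 2`.
-/

section Rank

open Finset

variable {α : Type*} [LinearOrder α]

/-- The rank of `x` relative to the finite set `X`: the number of elements of `X` below `x`.
The point `x` need not lie in `X`, so that `rankIn X` is monotone on the whole order. -/
def rankIn (X : Finset α) (x : α) : ℕ := #{y ∈ X | y < x}

lemma rankIn_monotone (X : Finset α) : Monotone (rankIn X) := fun _ _ hxy =>
  card_le_card (monotone_filter_right _ fun _ _ hy => hy.trans_le hxy)

lemma strictMonoOn_rankIn (X : Finset α) : StrictMonoOn (rankIn X) X := fun x hx y _ hxy =>
  card_lt_card ((ssubset_iff_of_subset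
    (monotone_filter_right _ fun _ _ hz => hz.trans hxy)).2 ⟨x, by simpa using ⟨hx, hxy⟩⟩)

lemma rankIn_lt_card {X : Finset α} {x : α} (hx : x ∈ X) : rankIn X x < #X :=
  card_lt_card (filter_ssubset.2 ⟨x, hx, lt_irrefl x⟩)

lemma image_rankIn (X : Finset α) : X.image (rankIn X) = range #X := by
  refine eq_of_subset_of_card_le (fun i hi => ?_) ?_
  · obtain ⟨x, hx, rfl⟩ := mem_image.1 hi
    exact mem_range.2 (rankIn_lt_card hx)
  · rw [card_image_of_injOn (strictMonoOn_rankIn X).injOn, card_range]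

lemma exists_rankIn_eq {X : Finset α} {i : ℕ} (hi : i < #X) : ∃ x ∈ X, rankIn X x = i :=
  mem_image.1 (image_rankIn X ▸ mem_range.2 hi)

/-- The `i`-th chunk of `X` when `X` is cut, from the bottom up, into consecutive chunks of `w`
elements; only the last nonempty chunk may have fewer than `w` elements. -/
def chunk (w : ℕ) (X : Finset α) (i : ℕ) : Finset α := {x ∈ X | rankIn X x / w = i}

lemma chunk_subset (w : ℕ) (X : Finset α) (i : ℕ) : chunk w X i ⊆ X := filter_subset _ _

lemma lt_of_mem_chunk {w i i' : ℕ} {X : Finset α} {x y : α} (hx : x ∈ chunk w X i)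
    (hy : y ∈ chunk w X i') (hi : i < i') : x < y := by
  rw [← (mem_filter.1 hx).2, ← (mem_filter.1 hy).2] at hi
  exact (rankIn_monotone X).reflect_lt (Nat.lt_of_div_lt_div hi)

lemma card_chunk (w : ℕ) (X : Finset α) (i : ℕ) :
    #(chunk w X i) = #{m ∈ range #X | m / w = i} := by
  rw [← image_rankIn, filter_image,
    card_image_of_injOn ((strictMonoOn_rankIn X).injOn.mono (filter_subset _ _))]
  rfl

lemma card_chunk_le {w : ℕ} (hw : 0 < w) (X : Finset α) (i : ℕ) : #(chunk w X i) ≤ w := by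
  calc #(chunk w X i) = #{m ∈ range #X | m / w = i} := card_chunk w X i
    _ ≤ #(Ico (i * w) ((i + 1) * w)) := card_le_card fun m hm => by
        rw [mem_Ico, ← Nat.le_div_iff_mul_le hw, ← Nat.div_lt_iff_lt_mul hw]
        have := (mem_filter.1 hm).2
        omega
    _ = w := by rw [Nat.card_Ico, Nat.succ_mul, Nat.add_sub_cancel_left]

lemma le_card_chunk {w i : ℕ} {X : Finset α} (hi : i < #X / w) : w ≤ #(chunk w X i) := by
  have hw : 0 < w := Nat.pos_of_ne_zero (by rintro rfl; simp at hi)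
  calc w = #(Ico (i * w) ((i + 1) * w)) := by
        rw [Nat.card_Ico, Nat.succ_mul, Nat.add_sub_cancel_left]
    _ ≤ #{m ∈ range #X | m / w = i} := card_le_card fun m hm => by
        obtain ⟨hlo, hhi⟩ := mem_Ico.1 hm
        have hX : (i + 1) * w ≤ #X := (Nat.le_div_iff_mul_le hw).1 hi
        exact mem_filter.2 ⟨mem_range.2 (hhi.trans_le hX), Nat.div_eq_of_lt_le hlo hhi⟩
    _ = #(chunk w X i) := (card_chunk w X i).symm

end Rank

section Formations

open Finset

variable {α β ι κ : Type*} [LinearOrder α] [LinearOrder β] {r s : ℕ} {I J : Finset ι}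
  {S S' : ι → Finset α}

/-- The family of columns `S j`, `j ∈ I`, each given by its finite set of rows, contains no
`(r, s)`-formation: no partition of the rows into `s` intervals has `r` columns meeting all of
them. The intervals are the level sets of a monotone map `g` at `0, …, s - 1`. -/
def FormationFree (r s : ℕ) (I : Finset ι) (S : ι → Finset α) : Prop :=
  ∀ ⦃g : α → ℕ⦄, Monotone g → ∀ ⦃T : Finset ι⦄, T ⊆ I →
    (∀ j ∈ T, range s ⊆ (S j).image g) → #T < r

namespace FormationFree

lemma mono (h : FormationFree r s I S) (hJ : J ⊆ I) (hS : ∀ j ∈ J, S' j ⊆ S j) :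
    FormationFree r s J S' := fun _ hg _ hT hhit =>
  h hg (hT.trans hJ) fun j hj => (hhit j hj).trans (image_mono _ (hS j (hT hj)))

lemma subset (h : FormationFree r s I S) (hJ : J ⊆ I) : FormationFree r s J S :=
  h.mono hJ fun _ _ => Subset.rfl

lemma image (h : FormationFree r s I S) {f : α → β} (hf : Monotone f) :
    FormationFree r s I fun j => (S j).image f := fun g hg _ hT hhit =>
  h (hg.comp hf) hT fun j hj => image_image (f := f) (g := g) ▸ hhit j hj

lemma filter_le (h : FormationFree r (s + 1) I S) {f : α → β} (hf : Monotone f) {b : β}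
    (hI : ∀ j ∈ I, ∃ x ∈ S j, b < f x) :
    FormationFree r s I fun j => {x ∈ S j | f x ≤ b} := by
  intro g hg T hT hhit
  refine h (g := fun x => if f x ≤ b then min (g x) s else s) (fun x y hxy => ?_) hT
    fun j hj i hi => ?_
  · have := hg hxy
    have := hf hxy
    grind
  · obtain rfl | his : i = s ∨ i < s := by grind
    · obtain ⟨x, hx, hbx⟩ := hI j (hT hj)
      exact mem_image.2 ⟨x, hx, if_neg hbx.not_ge⟩
    · obtain ⟨x, hx, rfl⟩ := mem_image.1 (hhit j hj (mem_range.2 his))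
      obtain ⟨hxS, hxb⟩ := mem_filter.1 hx
      exact mem_image.2 ⟨x, hxS, by rw [if_pos hxb, min_eq_left his.le]⟩

lemma filter_ge (h : FormationFree r (s + 1) I S) {f : α → β} (hf : Monotone f) {b : β}
    (hI : ∀ j ∈ I, ∃ x ∈ S j, f x < b) :
    FormationFree r s I fun j => {x ∈ S j | b ≤ f x} := by
  intro g hg T hT hhit
  refine h (g := fun x => if b ≤ f x then g x + 1 else 0) (fun x y hxy => ?_) hT
    fun j hj i hi => ?_
  · have := hg hxy
    have := hf hxy
    grind
  · rcases i with _ | i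
    · obtain ⟨x, hx, hxb⟩ := hI j (hT hj)
      exact mem_image.2 ⟨x, hx, if_neg hxb.not_ge⟩
    · obtain ⟨x, hx, rfl⟩ := mem_image.1 (hhit j hj (mem_range.2 (by simpa using hi)))
      obtain ⟨hxS, hxb⟩ := mem_filter.1 hx
      exact mem_image.2 ⟨x, hxS, if_pos hxb⟩

lemma block_of_above (h : FormationFree r (s + 1) I S) {f : α → β} (hf : Monotone f) {b : β}
    (hI : ∀ j ∈ I, ∃ x ∈ S j, b < f x) : FormationFree r s I fun j => {x ∈ S j | f x = b} :=
  (h.filter_le hf hI).mono Subset.rfl fun _ _ => monotone_filter_right _ fun _ _ hx => hx.le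

lemma block_of_below (h : FormationFree r (s + 1) I S) {f : α → β} (hf : Monotone f) {b : β}
    (hI : ∀ j ∈ I, ∃ x ∈ S j, f x < b) : FormationFree r s I fun j => {x ∈ S j | f x = b} :=
  (h.filter_ge hf hI).mono Subset.rfl fun _ _ => monotone_filter_right _ fun _ _ hx => hx.ge

lemma block_of_above_of_below (h : FormationFree r (s + 2) I S) {f : α → β} (hf : Monotone f)
    {b : β} (habove : ∀ j ∈ I, ∃ x ∈ S j, b < f x) (hbelow : ∀ j ∈ I, ∃ x ∈ S j, f x < b) :
    FormationFree r s I fun j => {x ∈ S j | f x = b} := by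
  refine ((h.filter_le hf habove).block_of_below hf (b := b) fun j hj => ?_).mono Subset.rfl
    fun j _ x hx => ?_
  · obtain ⟨x, hx, hxb⟩ := hbelow j hj
    exact ⟨x, mem_filter.2 ⟨hx, hxb.le⟩, hxb⟩
  · obtain ⟨hxS, hxb⟩ := mem_filter.1 hx
    exact mem_filter.2 ⟨mem_filter.2 ⟨hxS, hxb.le⟩, hxb⟩

lemma card_le_mul (h : FormationFree r s I S) {K : Finset κ} {g : κ → α → ℕ}
    (hg : ∀ k, Monotone (g k)) (hcover : ∀ j ∈ I, ∃ k ∈ K, range s ⊆ (S j).image (g k)) :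
    #I ≤ r * #K := by
  classical
  calc #I ≤ #(K.biUnion fun k => {j ∈ I | range s ⊆ (S j).image (g k)}) :=
        card_le_card fun j hj => by
          obtain ⟨k, hk, hjk⟩ := hcover j hj
          exact mem_biUnion.2 ⟨k, hk, mem_filter.2 ⟨hj, hjk⟩⟩
    _ ≤ #K * r := card_biUnion_le_card_mul _ _ _ fun k _ =>
        (h (hg k) (filter_subset _ _) fun j hj => (mem_filter.1 hj).2).le
    _ = r * #K := mul_comm _ _

/- Two chunks of one column cannot both meet the intervals `0` and `1`, so the chunks of a
formation come from distinct columns. -/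
lemma chunk (h : FormationFree r s I S) (hs : 2 ≤ s) (w : ℕ) (K : ι → Finset ℕ) :
    FormationFree r s (I.sigma K) fun p => chunk w (S p.1) p.2 := by
  classical
  intro g hg T hT hhit
  have chunk_not_lt : ∀ j i i', ⟨j, i⟩ ∈ T → ⟨j, i'⟩ ∈ T → ¬ i < i' := fun j i i' hp hp' hi => by
    obtain ⟨x, hx, hgx⟩ := mem_image.1 (hhit _ hp (mem_range.2 (by omega : 1 < s)))
    obtain ⟨y, hy, hgy⟩ := mem_image.1 (hhit _ hp' (mem_range.2 (by omega : 0 < s)))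
    have := hg (lt_of_mem_chunk hx hy hi).le
    omega
  have fst_injOn : Set.InjOn Sigma.fst (T : Set (Σ _ : ι, ℕ)) := by
    rintro ⟨j, i⟩ hp ⟨_, i'⟩ hp' rfl
    rw [le_antisymm (not_lt.1 (chunk_not_lt j i' i hp' hp)) (not_lt.1 (chunk_not_lt j i i' hp hp'))]
  rw [← card_image_of_injOn fst_injOn]
  refine h hg (image_subset_iff.2 fun p hp => (mem_sigma.1 (hT hp)).1) fun j hj => ?_
  obtain ⟨p, hp, rfl⟩ := mem_image.1 hj
  exact (hhit p hp).trans (image_mono _ (chunk_subset _ _ _))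

end FormationFree

end Formations

section ColumnBound

open Finset

variable {α ι : Type} [LinearOrder α] {r s q q₀ q₁ q₂ M W B L L₀ L₁ L₂ L₃ : ℕ} {R : Finset α}
  {I : Finset ι} {S : ι → Finset α}

/-- A linear bound on the number of heavy columns: a family of columns without
`(r, s)`-formation, living on a set `R` of at most `M` rows and having more than `q` elements
each, has at most `L * #R` members. -/
def ColumnBound (r s q M L : ℕ) : Prop :=
  ∀ ⦃α ι : Type⦄ [LinearOrder α] ⦃R : Finset α⦄ ⦃I : Finset ι⦄ ⦃S : ι → Finset α⦄, #R ≤ M →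
    (∀ j ∈ I, S j ⊆ R) → (∀ j ∈ I, q < #(S j)) → FormationFree r s I S → #I ≤ L * #R

namespace ColumnBound

lemma mono {M' L' : ℕ} (h : ColumnBound r s q M L) (hM : M' ≤ M) (hL : L ≤ L') :
    ColumnBound r s q M' L' := fun _ _ _ _ _ _ hR hSR hq hfree =>
  (h (hR.trans hM) hSR hq hfree).trans (Nat.mul_le_mul_right _ hL)

/- Cut each column right after its lowest element. -/
lemma two (r M : ℕ) : ColumnBound r 2 1 M r := by
  intro α ι _ R I S _ hSR hq hfree
  refine hfree.card_le_mul (K := R) (g := fun x y => if y ≤ x then 0 else 1)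
    (fun x y z hyz => by grind) fun j hj => ?_
  obtain ⟨x, hx, hx0⟩ := exists_rankIn_eq (zero_lt_one.trans (hq j hj))
  obtain ⟨y, hy, hy1⟩ := exists_rankIn_eq (hq j hj)
  have hxy : x < y := (rankIn_monotone (S j)).reflect_lt (by omega)
  refine ⟨x, hSR j hj hx, fun i hi => mem_image.2 ?_⟩
  obtain rfl | rfl : i = 0 ∨ i = 1 := by grind
  · exact ⟨x, hx, if_pos le_rfl⟩
  · exact ⟨y, hy, if_neg hxy.not_ge⟩

/- Cut each column right before and right after its second lowest element. -/
lemma three (r M : ℕ) : ColumnBound r 3 2 M r := by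
  intro α ι _ R I S _ hSR hq hfree
  refine hfree.card_le_mul (K := R) (g := fun x y => if y < x then 0 else if y ≤ x then 1 else 2)
    (fun x y z hyz => by grind) fun j hj => ?_
  obtain ⟨x, hx, hx0⟩ := exists_rankIn_eq (zero_lt_two.trans (hq j hj))
  obtain ⟨y, hy, hy1⟩ := exists_rankIn_eq (one_lt_two.trans (hq j hj))
  obtain ⟨z, hz, hz2⟩ := exists_rankIn_eq (hq j hj)
  have hxy : x < y := (rankIn_monotone (S j)).reflect_lt (by omega)
  have hyz : y < z := (rankIn_monotone (S j)).reflect_lt (by omega)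
  refine ⟨y, hSR j hj hy, fun i hi => mem_image.2 ?_⟩
  obtain rfl | rfl | rfl : i = 0 ∨ i = 1 ∨ i = 2 := by grind
  · exact ⟨x, hx, if_pos hxy⟩
  · exact ⟨y, hy, by rw [if_neg (lt_irrefl y), if_pos le_rfl]⟩
  · exact ⟨z, hz, by rw [if_neg hyz.not_gt, if_neg hyz.not_ge]⟩

/- Columns that are equal and have at least `s` elements contain a formation as soon as there are
`r` of them, so each subset of `R` occurs fewer than `r` times. -/
lemma two_pow (r M : ℕ) (hs : s ≤ q + 1) : ColumnBound r s q M (r * 2 ^ M) := by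
  intro α ι _ R I S hR hSR hq hfree
  have card_le : #I ≤ r * #R.powerset :=
    hfree.card_le_mul (g := rankIn) rankIn_monotone fun j hj =>
      ⟨S j, mem_powerset.2 (hSR j hj),
        image_rankIn (S j) ▸ range_subset_range.2 (hs.trans (hq j hj))⟩
  rcases R.eq_empty_or_nonempty with rfl | hne
  · suffices I = ∅ by simp [this]
    refine eq_empty_of_forall_notMem fun j hj => ?_
    have hempty := card_le_card (hSR j hj)
    have hheavy := hq j hj
    rw [card_empty] at hempty
    omega
  · calc #I ≤ r * 2 ^ #R := card_powerset R ▸ card_le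
      _ ≤ r * 2 ^ M := by gcongr; norm_num
      _ ≤ r * 2 ^ M * #R := Nat.le_mul_of_pos_right _ hne.card_pos

open Classical in
lemma card_filter_heavy_block_le (h : ColumnBound r s q W L) {f : α → ℕ}
    (hW : ∀ b, #{x ∈ R | f x = b} ≤ W) (hSR : ∀ j ∈ I, S j ⊆ R) (P : ℕ → ι → Prop)
    (hfree : ∀ b, ∀ J ⊆ I, (∀ j ∈ J, P b j) → FormationFree r s J fun j => {x ∈ S j | f x = b}) :
    #{j ∈ I | ∃ b, q < #{x ∈ S j | f x = b} ∧ P b j} ≤ L * #R := by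
  let J b := {j ∈ I | q < #{x ∈ S j | f x = b} ∧ P b j}
  have hcover : {j ∈ I | ∃ b, q < #{x ∈ S j | f x = b} ∧ P b j} ⊆ (R.image f).biUnion J :=
    fun j hj => by
      obtain ⟨hjI, b, hb, hP⟩ := mem_filter.1 hj
      obtain ⟨x, hx⟩ := card_pos.1 ((Nat.zero_le q).trans_lt hb)
      obtain ⟨hxS, rfl⟩ := mem_filter.1 hx
      exact mem_biUnion.2
        ⟨f x, mem_image_of_mem f (hSR j hjI hxS), mem_filter.2 ⟨hjI, hb, hP⟩⟩
  have J_le (b : ℕ) : #(J b) ≤ L * #{x ∈ R | f x = b} :=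
    h (hW b) (fun j hj => filter_subset_filter _ (hSR j (mem_filter.1 hj).1))
      (fun j hj => (mem_filter.1 hj).2.1)
      (hfree b _ (filter_subset _ _) fun j hj => (mem_filter.1 hj).2.2)
  calc #{j ∈ I | ∃ b, q < #{x ∈ S j | f x = b} ∧ P b j} ≤ #((R.image f).biUnion J) :=
        card_le_card hcover
    _ ≤ ∑ b ∈ R.image f, #(J b) := card_biUnion_le
    _ ≤ ∑ b ∈ R.image f, L * #{x ∈ R | f x = b} := sum_le_sum fun b _ => J_le b
    _ = L * #R := by rw [← mul_sum, ← card_eq_sum_card_image]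

end ColumnBound

/- Otherwise the lowest and the highest block of `X` have at most `q₁` elements each and the at
most `q₀` blocks in between at most `q₂`. -/
lemma exists_heavy_block {α : Type*} {X : Finset α} {f : α → ℕ}
    (hX : 2 * q₁ + q₂ * q₀ < #X) (hblocks : #(X.image f) ≤ q₀) :
    ∃ b, 2 * q₁ + q₂ * q₀ < #{x ∈ X | f x = b} ∨
      (q₁ < #{x ∈ X | f x = b} ∧ ∃ x ∈ X, b < f x) ∨
      (q₁ < #{x ∈ X | f x = b} ∧ ∃ x ∈ X, f x < b) ∨
      (q₂ < #{x ∈ X | f x = b} ∧ (∃ x ∈ X, b < f x) ∧ ∃ x ∈ X, f x < b) := by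
  classical
  by_contra! hlight
  have hne : (X.image f).Nonempty := image_nonempty.2 (card_pos.1 (by omega))
  obtain ⟨x₀, hx₀, hmin⟩ := mem_image.1 ((X.image f).min'_mem hne)
  obtain ⟨x₁, hx₁, hmax⟩ := mem_image.1 ((X.image f).max'_mem hne)
  have f_mem : ∀ x ∈ X, f x₀ ≤ f x ∧ f x ≤ f x₁ := fun x hx =>
    ⟨hmin ▸ min'_le _ _ (mem_image_of_mem f hx), hmax ▸ le_max' _ _ (mem_image_of_mem f hx)⟩
  obtain hsingle | hlt := (f_mem x₀ hx₀).2.eq_or_lt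
  · have hall : ({x ∈ X | f x = f x₀} : Finset α) = X := filter_true_of_mem fun x hx => by
      have := f_mem x hx
      omega
    have := (hlight (f x₀)).1
    rw [hall] at this
    omega
  have low_le : #{x ∈ X | f x = f x₀} ≤ q₁ := by
    by_contra! hq
    exact ((hlight (f x₀)).2.1 hq x₁ hx₁).not_gt hlt
  have high_le : #{x ∈ X | f x = f x₁} ≤ q₁ := by
    by_contra! hq
    exact ((hlight (f x₁)).2.2.1 hq x₀ hx₀).not_gt hlt
  have mid_le : #{x ∈ X | f x₀ < f x ∧ f x < f x₁} ≤ q₂ * #(X.image f) := by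
    refine card_le_mul_card_image_of_maps_to
      (fun x hx => mem_image_of_mem f (mem_filter.1 hx).1) q₂ fun b _ => ?_
    by_contra! hq
    obtain ⟨x, hx⟩ := card_pos.1 ((Nat.zero_le _).trans_lt hq)
    obtain ⟨⟨-, hx₀b, hbx₁⟩, rfl⟩ := by simpa only [mem_filter] using hx
    exact ((hlight _).2.2.2 (hq.trans_le (card_le_card (filter_subset_filter _
      (filter_subset _ _)))) ⟨x₁, hx₁, hbx₁⟩ x₀ hx₀).not_gt hx₀b
  have hcover : X ⊆ {x ∈ X | f x = f x₀} ∪ {x ∈ X | f x = f x₁} ∪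
      {x ∈ X | f x₀ < f x ∧ f x < f x₁} := fun x hx => by
    have := f_mem x hx
    simp only [mem_union, mem_filter, hx, true_and]
    omega
  have := (card_le_card hcover).trans ((card_union_le _ _).trans
    (Nat.add_le_add_right (card_union_le _ _) _))
  have := Nat.mul_le_mul_left q₂ hblocks
  omega

namespace ColumnBound

/- The columns meeting more than `q₀` blocks are counted after contracting every block to a
point. Any other column has a heavy block: `L₃` counts those with a block heavy enough by itself,
`L₁` those with a heavy block that has a row of the column beyond it on one given side, and `L₂`
those whose heavy block has such rows on both sides. -/
lemma card_le_of_blocks (h₃ : ColumnBound r (s + 2) (2 * q₁ + q₂ * q₀) W L₃)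
    (h₁ : ColumnBound r (s + 1) q₁ W L₁) (h₂ : ColumnBound r s q₂ W L₂)
    (h₀ : ColumnBound r (s + 2) q₀ B L₀) {f : α → ℕ} (hf : Monotone f)
    (hW : ∀ b, #{x ∈ R | f x = b} ≤ W) (hB : #(R.image f) ≤ B) (hSR : ∀ j ∈ I, S j ⊆ R)
    (hq : ∀ j ∈ I, 2 * q₁ + q₂ * q₀ < #(S j)) (hfree : FormationFree r (s + 2) I S) :
    #I ≤ (L₃ + 2 * L₁ + L₂) * #R + L₀ * #(R.image f) := by
  classical
  have single_le := h₃.card_filter_heavy_block_le hW hSR (fun _ _ => True) fun b J hJ _ =>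
    (hfree.subset hJ).mono Subset.rfl fun j _ => filter_subset _ _
  have above_le := h₁.card_filter_heavy_block_le hW hSR (fun b j => ∃ x ∈ S j, b < f x)
    fun b J hJ hP => (hfree.subset hJ).block_of_above hf hP
  have below_le := h₁.card_filter_heavy_block_le hW hSR (fun b j => ∃ x ∈ S j, f x < b)
    fun b J hJ hP => (hfree.subset hJ).block_of_below hf hP
  have inner_le := h₂.card_filter_heavy_block_le hW hSR
    (fun b j => (∃ x ∈ S j, b < f x) ∧ ∃ x ∈ S j, f x < b) fun b J hJ hP =>
      (hfree.subset hJ).block_of_above_of_below hf (fun j hj => (hP j hj).1) fun j hj => (hP j hj).2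
  have spread_le : #{j ∈ I | q₀ < #((S j).image f)} ≤ L₀ * #(R.image f) :=
    h₀ hB (fun j hj => image_subset_image (hSR j (mem_filter.1 hj).1))
      (fun j hj => (mem_filter.1 hj).2) ((hfree.subset (filter_subset _ _)).image hf)
  have hcover : I ⊆ {j ∈ I | ∃ b, 2 * q₁ + q₂ * q₀ < #{x ∈ S j | f x = b} ∧ True} ∪
      {j ∈ I | ∃ b, q₁ < #{x ∈ S j | f x = b} ∧ ∃ x ∈ S j, b < f x} ∪
      {j ∈ I | ∃ b, q₁ < #{x ∈ S j | f x = b} ∧ ∃ x ∈ S j, f x < b} ∪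
      {j ∈ I | ∃ b, q₂ < #{x ∈ S j | f x = b} ∧ (∃ x ∈ S j, b < f x) ∧ ∃ x ∈ S j, f x < b} ∪
      {j ∈ I | q₀ < #((S j).image f)} := fun j hj => by
    simp only [mem_union, mem_filter, hj, true_and, and_true, ← exists_or, or_assoc]
    rcases lt_or_ge q₀ #((S j).image f) with hspread | hblocks
    · exact .inr hspread
    · exact .inl (exists_heavy_block (hq j hj) hblocks)
  have := card_le_card hcover
  grind [card_union_le]

end ColumnBound

end ColumnBound

section AckermannBound

open Finset

/-- An Ackermann-type hierarchy inverse to `alphaHier`: `ackHier (i + 1)` is obtained by iterating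
`w ↦ w * ackHier i w`, starting from `1`. -/
def ackHier : ℕ → ℕ → ℕ
  | 0, _ => 2
  | _ + 1, 0 => 1
  | i + 1, j + 1 => ackHier (i + 1) j * ackHier i (ackHier (i + 1) j)
  termination_by i j => (i, j)

lemma ackHier_one (i : ℕ) : ackHier i 1 = 2 := by
  induction i with
  | zero => simp only [ackHier]
  | succ i ih => rw [ackHier, ackHier, ih]

lemma ackHier_pos (i j : ℕ) : 0 < ackHier i j := by
  fun_induction ackHier i j with
  | case1 => norm_num
  | case2 => norm_num
  | case3 i j ih ih' => exact Nat.mul_pos ih ih'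

lemma two_le_ackHier (i : ℕ) {j : ℕ} (hj : 1 ≤ j) : 2 ≤ ackHier i j := by
  induction j, hj using Nat.le_induction with
  | base => exact (ackHier_one i).ge
  | succ j _ ih =>
    cases i with
    | zero => simp only [ackHier, le_rfl]
    | succ i =>
      rw [ackHier]
      exact ih.trans (Nat.le_mul_of_pos_right _ (ackHier_pos _ _))

/-- The height above which columns without `(r, u + 2)`-formation count as heavy when there are
at most `ackHier i j ^ c` rows; the recursion is the one of `ColumnBound.step`. -/
def thickness : ℕ → ℕ → ℕ
  | 0, _ => 1
  | 1, _ => 2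
  | u + 2, 0 => u + 3
  | u + 2, i + 1 => 2 * thickness (u + 1) (i + 1) + thickness u (i + 1) * thickness (u + 2) i
  termination_by u i => (u, i)

lemma le_thickness (u i : ℕ) : u + 1 ≤ thickness u i := by
  fun_induction thickness u i with
  | case1 => rfl
  | case2 => rfl
  | case3 => rfl
  | case4 u i ih _ _ => omega

lemma four_mul_pow_le_pow {w u c : ℕ} (hw : 2 ≤ w) (hc : u + 2 ≤ c) : 4 * w ^ u ≤ w ^ c := by
  calc 4 * w ^ u ≤ w ^ 2 * w ^ u := by gcongr; exact Nat.pow_le_pow_left hw 2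
    _ = w ^ (u + 2) := by ring
    _ ≤ w ^ c := Nat.pow_le_pow_right (by omega) hc

/- This is the recursion of the constants in `columnBound_ackHier`; the last summand on the left
pays for the contracted blocks. -/
lemma six_mul_pow_add_le {j : ℕ} (u : ℕ) (hj : 1 ≤ j) :
    (6 * j) ^ (u + 2) + 2 * (6 * j) ^ (u + 1) + (6 * j) ^ u + 18 * 6 ^ u ≤
      (6 * (j + 1)) ^ (u + 2) := by
  have hu : 1 ≤ j ^ u := Nat.one_le_pow _ _ hj
  calc (6 * j) ^ (u + 2) + 2 * (6 * j) ^ (u + 1) + (6 * j) ^ u + 18 * 6 ^ u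
      ≤ (6 * j) ^ (u + 2) + 2 * (6 * j) ^ (u + 1) + (6 * j) ^ u + 18 * 6 ^ u * j ^ u := by
        exact Nat.add_le_add_left (Nat.le_mul_of_pos_right _ hu) _
    _ = 6 ^ u * j ^ u * (36 * j ^ 2 + 12 * j + 19) := by ring
    _ ≤ 6 ^ u * (j + 1) ^ u * (36 * (j + 1) ^ 2) := by gcongr <;> nlinarith
    _ = (6 * (j + 1)) ^ (u + 2) := by simp only [mul_pow, pow_add]; ring

namespace ColumnBound

variable {α ι : Type} [LinearOrder α] {r s q q₀ q₁ q₂ M W B L L₀ L₁ L₂ L₃ : ℕ} {R : Finset α}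
  {I : Finset ι} {S : ι → Finset α}

/- Cut the rows into blocks of `W` consecutive rows. -/
lemma step {L' : ℕ} (h₃ : ColumnBound r (s + 2) (2 * q₁ + q₂ * q₀) W L₃)
    (h₁ : ColumnBound r (s + 1) q₁ W L₁) (h₂ : ColumnBound r s q₂ W L₂)
    (h₀ : ColumnBound r (s + 2) q₀ B L₀) (hW : 0 < W) (hL : 2 * L₀ ≤ L' * W) :
    ColumnBound r (s + 2) (2 * q₁ + q₂ * q₀) (B * W) (L₃ + 2 * L₁ + L₂ + L') := by
  intro α ι _ R I S hR hSR hq hfree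
  rcases lt_or_ge #R W with hRW | hWR
  · exact (h₃.mono le_rfl (by omega)) hRW.le hSR hq hfree
  have image_blocks : R.image (fun x => rankIn R x / W) ⊆ range ((#R - 1) / W + 1) := by
    refine image_subset_iff.2 fun x hx => mem_range_succ_iff.2 (Nat.div_le_div_right ?_)
    exact Nat.le_sub_one_of_lt (rankIn_lt_card hx)
  have card_blocks : #(R.image fun x => rankIn R x / W) ≤ (#R - 1) / W + 1 :=
    (card_le_card image_blocks).trans_eq (card_range _)
  have card_blocks_le : (#R - 1) / W + 1 ≤ B :=
    Nat.succ_le_of_lt ((Nat.div_lt_iff_lt_mul hW).2 (by omega))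
  have card_blocks_mul_le : ((#R - 1) / W + 1) * W ≤ 2 * #R := by
    have := Nat.div_mul_le_self (#R - 1) W
    rw [Nat.add_mul]
    omega
  have contracted_le : L₀ * #(R.image fun x => rankIn R x / W) ≤ L' * #R := by
    suffices 2 * (L₀ * #(R.image fun x => rankIn R x / W)) ≤ 2 * (L' * #R) by omega
    calc 2 * (L₀ * #(R.image fun x => rankIn R x / W))
        ≤ L' * W * ((#R - 1) / W + 1) := by rw [← mul_assoc]; gcongr
      _ = L' * (((#R - 1) / W + 1) * W) := by ring
      _ ≤ L' * (2 * #R) := by gcongr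
      _ = 2 * (L' * #R) := by ring
  have := h₃.card_le_of_blocks h₁ h₂ h₀
    (fun x y hxy => Nat.div_le_div_right (rankIn_monotone R hxy)) (card_chunk_le hW R)
    (card_blocks.trans card_blocks_le) hSR hq hfree
  linarith

lemma sum_card_le (hb : ColumnBound r s q M L) (hs : 2 ≤ s) (hR : #R ≤ M)
    (hSR : ∀ j ∈ I, S j ⊆ R) (h : FormationFree r s I S) :
    ∑ j ∈ I, #(S j) ≤ (q + 1) * (L * #R + #I) := by
  have pieces_le : ∑ j ∈ I, #(S j) / (q + 1) ≤ L * #R := by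
    calc ∑ j ∈ I, #(S j) / (q + 1) = #(I.sigma fun j => range (#(S j) / (q + 1))) := by
          simp only [card_sigma, card_range]
      _ ≤ L * #R := ?_
    refine hb hR (fun p hp => ?_) (fun p hp => ?_) (h.chunk hs (q + 1) _)
    · exact (chunk_subset _ _ _).trans (hSR p.1 (mem_sigma.1 hp).1)
    · exact le_card_chunk (mem_range.1 (mem_sigma.1 hp).2)
  calc ∑ j ∈ I, #(S j) ≤ ∑ j ∈ I, (q + 1) * (#(S j) / (q + 1) + 1) :=
        sum_le_sum fun j _ => (Nat.lt_mul_div_succ _ q.succ_pos).le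
    _ = (q + 1) * (∑ j ∈ I, #(S j) / (q + 1) + #I) := by
        rw [← mul_sum, sum_add_distrib, card_eq_sum_ones]
    _ ≤ (q + 1) * (L * #R + #I) := by gcongr

end ColumnBound

theorem columnBound_ackHier (r : ℕ) {u c : ℕ} (hc : u + 2 ≤ c) (i : ℕ) {j : ℕ} (hj : 1 ≤ j) :
    ColumnBound r (u + 2) (thickness u i) (ackHier i j ^ c) (r * 2 ^ 2 ^ c * (6 * j) ^ u) := by
  have trivial_le (v : ℕ) {l : ℕ} (hl : 1 ≤ l) :
      ColumnBound r (v + 2) (thickness v i) (2 ^ c) (r * 2 ^ 2 ^ c * (6 * l) ^ v) :=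
    (ColumnBound.two_pow r (2 ^ c) (Nat.succ_le_succ (le_thickness v i))).mono le_rfl
      (Nat.le_mul_of_pos_right _ (by positivity))
  match u, i, j, hc, hj with
  | 0, _, _, _, _ =>
    rw [thickness, pow_zero, mul_one]
    exact (ColumnBound.two r _).mono le_rfl (Nat.le_mul_of_pos_right _ (by positivity))
  | 1, _, j, _, hj =>
    rw [thickness, mul_assoc]
    exact (ColumnBound.three r _).mono le_rfl (Nat.le_mul_of_pos_right _ (by positivity))
  | u + 2, 0, j, _, hj => rw [ackHier]; exact trivial_le _ hj
  | u + 2, i + 1, 1, _, _ => rw [ackHier_one]; exact trivial_le _ le_rfl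
  | u + 2, i + 1, j + 2, hc, _ =>
    have h₃ := columnBound_ackHier r hc (i + 1) (j := j + 1) (by omega)
    have h₁ := columnBound_ackHier r (show u + 1 + 2 ≤ c by omega) (i + 1) (j := j + 1) (by omega)
    have h₂ := columnBound_ackHier r (show u + 2 ≤ c by omega) (i + 1) (j := j + 1) (by omega)
    have h₀ := columnBound_ackHier r hc i (ackHier_pos (i + 1) (j + 1))
    set w := ackHier (i + 1) (j + 1) with hw
    have hpow : 4 * w ^ (u + 2) ≤ w ^ c :=
      four_mul_pow_le_pow (two_le_ackHier (i + 1) (by omega)) hc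
    rw [thickness] at h₃ ⊢
    rw [ackHier, ← hw, mul_pow, mul_comm (w ^ c)]
    have w_pow_pos : 0 < w ^ c := Nat.pow_pos (ackHier_pos _ _)
    refine (h₃.step (L' := r * 2 ^ 2 ^ c * (18 * 6 ^ u)) h₁ h₂ h₀ w_pow_pos ?_).mono le_rfl ?_
    · calc 2 * (r * 2 ^ 2 ^ c * (6 * w) ^ (u + 2))
          = r * 2 ^ 2 ^ c * (18 * 6 ^ u) * (4 * w ^ (u + 2)) := by ring
        _ ≤ r * 2 ^ 2 ^ c * (18 * 6 ^ u) * w ^ c := by gcongr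
    · exact (le_of_eq (by ring)).trans
        (Nat.mul_le_mul_left (r * 2 ^ 2 ^ c) (six_mul_pow_add_le u j.succ_pos))
  termination_by (u, i, j)

end AckermannBound

section InverseAckermann

lemma iterCount_le_sub_one {f : ℕ → ℕ} (hf : ∀ m, 2 ≤ m → f m < m) (fuel m : ℕ) :
    iterCount f fuel m ≤ m - 1 := by
  induction fuel generalizing m with
  | zero => exact Nat.zero_le _
  | succ fuel ih =>
    rw [iterCount]
    split_ifs with hm
    · exact Nat.zero_le _
    · have := hf m (by omega)
      have := ih (f m)
      omega

lemma iterCount_eq_of_le {f : ℕ → ℕ} (hf : ∀ m, 2 ≤ m → f m < m) {m fuel : ℕ} (hm : m ≤ fuel) :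
    iterCount f fuel m = iterCount f m m := by
  induction m using Nat.strong_induction_on generalizing fuel with
  | _ m ih =>
    match m, fuel, hm with
    | 0, 0, _ => rfl
    | 0, fuel + 1, _ => simp [iterCount]
    | m + 1, fuel + 1, hm =>
      rw [iterCount, iterCount]
      split_ifs with hm1
      · rfl
      · have hlt := hf (m + 1) (by omega)
        rw [ih _ hlt (by omega : f (m + 1) ≤ fuel), ih _ hlt (by omega : f (m + 1) ≤ m)]

lemma alphaHier_succ_lt (d : ℕ) {m : ℕ} (hm : 2 ≤ m) : alphaHier (d + 1) m < m := by
  induction d generalizing m with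
  | zero => rw [alphaHier]; omega
  | succ d ih => exact (iterCount_le_sub_one (fun _ => ih) m m).trans_lt (by omega)

lemma alphaHier_add_two (d : ℕ) {m : ℕ} (hm : 2 ≤ m) :
    alphaHier (d + 2) m = 1 + alphaHier (d + 2) (alphaHier (d + 1) m) := by
  have hlt : alphaHier (d + 1) m < m := alphaHier_succ_lt d hm
  obtain ⟨n, rfl⟩ : ∃ n, m = n + 1 := ⟨m - 1, by omega⟩
  rw [alphaHier, alphaHier, iterCount, if_neg (by omega),
    iterCount_eq_of_le (fun _ => alphaHier_succ_lt d) (by omega)]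

lemma alphaHier_pos (d : ℕ) {m : ℕ} (hm : 2 ≤ m) : 0 < alphaHier (d + 1) m := by
  cases d with
  | zero => rw [alphaHier]; omega
  | succ d => rw [alphaHier_add_two d hm]; omega

lemma alphaHier_add_two_le (d : ℕ) {m : ℕ} (hm : 4 ≤ m) : alphaHier (d + 1) m + 2 ≤ m := by
  induction d with
  | zero => rw [alphaHier]; omega
  | succ d ih =>
    have hpos : 0 < alphaHier (d + 1) m := alphaHier_pos d (by omega)
    have : alphaHier (d + 2) (alphaHier (d + 1) m) ≤ alphaHier (d + 1) m - 1 :=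
      iterCount_le_sub_one (fun _ => alphaHier_succ_lt d) _ _
    rw [alphaHier_add_two d (by omega)]
    omega

lemma exists_alphaHier_le_three (m : ℕ) : ∃ k, 1 ≤ k ∧ alphaHier k m ≤ 3 := by
  by_contra! hlarge
  have alphaHier_le : ∀ d, alphaHier (d + 1) m + d ≤ m := fun d => by
    induction d with
    | zero => rw [alphaHier]; omega
    | succ d ih =>
      have hd : 4 ≤ alphaHier (d + 1) m := hlarge (d + 1) (by omega)
      have : alphaHier (d + 2) (alphaHier (d + 1) m) + 2 ≤ alphaHier (d + 1) m :=
        alphaHier_add_two_le (d + 1) hd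
      rw [alphaHier_add_two d (by omega)]
      omega
  have := alphaHier_le m
  have := hlarge (m + 1) (by omega)
  omega

lemma invAck_spec (n : ℕ) : 1 ≤ invAck n ∧ alphaHier (invAck n) n ≤ 3 :=
  Nat.sInf_mem (exists_alphaHier_le_three n)

lemma two_mul_le_ackHier_one (j : ℕ) : 2 * j ≤ ackHier 1 j := by
  induction j with
  | zero => exact Nat.zero_le _
  | succ j ih =>
    have := ackHier_pos 1 j
    rw [ackHier, ackHier, zero_add]
    omega

lemma le_ackHier_of_alphaHier_le (d : ℕ) {j n : ℕ} (h : alphaHier (d + 1) n ≤ j) :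
    n ≤ ackHier (d + 1) j := by
  induction d generalizing j n with
  | zero =>
    have := two_mul_le_ackHier_one j
    rw [alphaHier] at h
    rw [zero_add]
    omega
  | succ d ih =>
    induction j generalizing n with
    | zero =>
      by_contra! hn
      rw [ackHier] at hn
      exact (alphaHier_pos (d + 1) hn).not_ge h
    | succ j ihj =>
      rcases lt_or_ge n 2 with hn | hn
      · exact (Nat.le_of_lt_succ hn).trans (ackHier_pos _ _)
      rw [alphaHier_add_two d hn, add_comm, Nat.add_le_add_iff_right] at h
      rw [ackHier]
      exact (ih (ihj h)).trans (Nat.le_mul_of_pos_left _ (ackHier_pos _ _))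

lemma le_ackHier_invAck (n : ℕ) : n ≤ ackHier (invAck n) 3 := by
  obtain ⟨hpos, hle⟩ := invAck_spec n
  obtain ⟨d, hd⟩ := Nat.exists_eq_add_of_le' hpos
  rw [hd] at hle ⊢
  exact le_ackHier_of_alphaHier_le d hle

end InverseAckermann

section ThicknessGrowth

lemma thickness_le_succ (u i : ℕ) : thickness u i ≤ thickness (u + 1) i := by
  match u, i with
  | 0, _ => rw [thickness]; exact (le_thickness 1 _).trans' one_le_two
  | 1, i => rw [thickness]; exact (le_thickness 2 i).trans' (by omega)
  | u + 2, 0 => simp [thickness]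
  | u + 2, i + 1 =>
    rw [thickness.eq_4 (u + 1)]
    exact (Nat.le_mul_of_pos_left _ two_pos).trans (Nat.le_add_right _ _)

lemma thickness_two (i : ℕ) : thickness 2 i = 3 + 4 * i := by
  induction i with
  | zero => simp [thickness]
  | succ i ih => rw [thickness, ih, thickness, thickness]; omega

lemma thickness_three (i : ℕ) : thickness 3 i + 8 * i + 22 = 26 * 2 ^ i := by
  induction i with
  | zero => simp [thickness]
  | succ i ih => rw [thickness, thickness_two, thickness, pow_succ]; grind

lemma thickness_add_three_le (u i : ℕ) :
    thickness (u + 3) (i + 1) ≤ 8 * (thickness (u + 1) (i + 1) * thickness (u + 3) i) := by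
  have hpos : 0 < thickness (u + 3) i := (Nat.succ_pos _).trans_le (le_thickness _ _)
  calc thickness (u + 3) (i + 1)
      = 4 * thickness (u + 1) (i + 1) + 2 * (thickness u (i + 1) * thickness (u + 2) i) +
        thickness (u + 1) (i + 1) * thickness (u + 3) i := by
        rw [thickness, thickness.eq_4 u]; ring
    _ ≤ 4 * (thickness (u + 1) (i + 1) * thickness (u + 3) i) +
        2 * (thickness (u + 1) (i + 1) * thickness (u + 3) i) +
        thickness (u + 1) (i + 1) * thickness (u + 3) i := by
        gcongr
        · exact Nat.le_mul_of_pos_right _ hpos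
        · exact thickness_le_succ _ _
        · exact thickness_le_succ _ _
    _ ≤ 8 * (thickness (u + 1) (i + 1) * thickness (u + 3) i) := by omega

lemma choose_add_le_choose_add {n k : ℕ} (hk : k ≤ n) (m : ℕ) :
    n.choose (k + 1) + m ≤ (n + m).choose (k + 1) := by
  induction m with
  | zero => rfl
  | succ m ih =>
    have := Nat.choose_pos (hk.trans (Nat.le_add_right n m))
    rw [← add_assoc n, Nat.choose_succ_succ']
    omega

lemma choose_add_three_add_choose_le (t i : ℕ) :
    (i + 1 + 5 * (t + 1)).choose (t + 1) + 3 + (i + 5 * (t + 2)).choose (t + 2) ≤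
      (i + 1 + 5 * (t + 2)).choose (t + 2) := by
  rw [show i + 1 + 5 * (t + 2) = i + 5 * (t + 2) + 1 by ring, Nat.choose_succ_succ',
    show i + 5 * (t + 2) = i + 1 + 5 * (t + 1) + 4 by ring]
  gcongr
  exact (choose_add_le_choose_add (by omega) 4).trans' (by omega)

lemma thickness_zero_le_two_pow_choose (t : ℕ) :
    thickness (2 * t + 3) 0 ≤ 2 ^ (5 * (t + 1)).choose (t + 1) := by
  have choose_ge : (t + 1).choose (t + 1) + (4 * t + 4) ≤ (t + 1 + (4 * t + 4)).choose (t + 1) :=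
    choose_add_le_choose_add t.le_succ (4 * t + 4)
  calc thickness (2 * t + 3) 0 = 2 * t + 4 := by rw [thickness]
    _ ≤ 2 ^ (2 * t + 4) := Nat.lt_two_pow_self.le
    _ ≤ 2 ^ (5 * (t + 1)).choose (t + 1) := by
      rw [show t + 1 + (4 * t + 4) = 5 * (t + 1) by ring] at choose_ge
      exact Nat.pow_le_pow_right two_pos (by omega)

/- Up to the factor `8`, `thickness_add_three_le` is Pascal's rule for the exponent. -/
lemma thickness_le_two_pow_choose (t i : ℕ) :
    thickness (2 * t + 3) i ≤ 2 ^ (i + 5 * (t + 1)).choose (t + 1) := by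
  match t, i with
  | 0, i =>
    have : thickness (2 * 0 + 3) i + 8 * i + 22 = 26 * 2 ^ i := thickness_three i
    rw [Nat.choose_one_right, pow_add]
    omega
  | t + 1, 0 =>
    rw [zero_add]
    exact thickness_zero_le_two_pow_choose (t + 1)
  | t + 1, i + 1 =>
    calc thickness (2 * (t + 1) + 3) (i + 1)
        ≤ 8 * (thickness (2 * t + 3) (i + 1) * thickness (2 * (t + 1) + 3) i) :=
          thickness_add_three_le (2 * t + 2) i
      _ ≤ 8 * (2 ^ (i + 1 + 5 * (t + 1)).choose (t + 1) *
            2 ^ (i + 5 * (t + 2)).choose (t + 2)) :=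
          Nat.mul_le_mul_left _ (Nat.mul_le_mul (thickness_le_two_pow_choose t (i + 1))
            (thickness_le_two_pow_choose (t + 1) i))
      _ = 2 ^ ((i + 1 + 5 * (t + 1)).choose (t + 1) + 3 +
            (i + 5 * (t + 2)).choose (t + 2)) := by ring
      _ ≤ 2 ^ (i + 1 + 5 * (t + 2)).choose (t + 2) :=
          Nat.pow_le_pow_right two_pos (choose_add_three_add_choose_le t i)
  termination_by (t, i)

end ThicknessGrowth

section Matrices

open Finset

variable {k m n : ℕ}

/-- The set of rows in which the column `j` of `M` has a `1`-entry. -/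
def colSupport (M : Fin m → Fin n → Bool) (j : Fin n) : Finset (Fin m) := {i | M i j}

lemma matOnes_eq_sum_card_colSupport (M : Fin m → Fin n → Bool) :
    matOnes M = ∑ j, #(colSupport M j) := by
  rw [matOnes, Nat.card_eq_fintype_card, Fintype.card_subtype, card_filter, ← univ_product_univ,
    sum_product_right]
  simp only [colSupport, card_filter]

lemma isFull_of_formation {M : Fin n → Fin n → Bool} {g : Fin n → ℕ} (hg : Monotone g)
    {C : Finset (Fin n)} (hC : k ≤ #C) (hhit : ∀ j ∈ C, range k ⊆ (colSupport M j).image g) :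
    IsFull k M := by
  obtain ⟨C', hC', hcard⟩ := exists_subset_card_eq hC
  refine ⟨C'.orderEmbOfFin hcard, (C'.orderEmbOfFin hcard).strictMono, fun σ => ?_⟩
  have hrow (a : Fin k) : ∃ x, M x (C'.orderEmbOfFin hcard (σ.symm a)) ∧ g x = a := by
    simpa [colSupport] using hhit _ (hC' (C'.orderEmbOfFin_mem hcard (σ.symm a)))
      (mem_range.2 a.2)
  choose row hrow_mem hrow_level using hrow
  refine ⟨row, fun a b hab => hg.reflect_lt ?_, fun b => ?_⟩
  · rwa [hrow_level, hrow_level]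
  · simpa only [Equiv.symm_apply_apply] using hrow_mem (σ b)

lemma formationFree_colSupport {M : Fin n → Fin n → Bool} (hM : ¬ IsFull k M) :
    FormationFree k k univ (colSupport M) := fun _ hg _ _ hhit =>
  not_le.1 fun hT => hM (isFull_of_formation hg hT hhit)

lemma pFull_le {q L : ℕ} (hk : 1 ≤ k) (hb : ColumnBound (k + 1) (k + 1) q n L) :
    pFull k n ≤ (q + 1) * ((L + 1) * n) := by
  refine csSup_le' ?_
  rintro _ ⟨M, hM, rfl⟩
  rw [matOnes_eq_sum_card_colSupport]
  refine (hb.sum_card_le (Nat.succ_le_succ hk) (card_fin n).le (fun j _ => subset_univ _)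
    (formationFree_colSupport hM)).trans_eq ?_
  rw [card_univ, Fintype.card_fin]
  ring

lemma exists_pFull_le_mul_thickness (u : ℕ) :
    ∃ K, ∀ n, pFull (u + 1) n ≤ n * (thickness u (invAck n) * K) := by
  let L := (u + 2) * 2 ^ 2 ^ (u + 2) * (6 * 3) ^ u
  refine ⟨2 * (L + 1), fun n => ?_⟩
  have hn : n ≤ ackHier (invAck n) 3 ^ (u + 2) :=
    (le_ackHier_invAck n).trans (Nat.le_self_pow (Nat.succ_ne_zero _) _)
  have hb : ColumnBound (u + 2) (u + 2) (thickness u (invAck n)) n L :=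
    (columnBound_ackHier (u + 2) le_rfl (invAck n) (by norm_num)).mono hn le_rfl
  have hpos : 1 ≤ thickness u (invAck n) := (Nat.succ_pos u).trans_le (le_thickness _ _)
  calc pFull (u + 1) n ≤ (thickness u (invAck n) + 1) * ((L + 1) * n) :=
        pFull_le (Nat.succ_pos u) hb
    _ ≤ (2 * thickness u (invAck n)) * ((L + 1) * n) := by gcongr; omega
    _ = n * (thickness u (invAck n) * (2 * (L + 1))) := by ring

end Matrices

section RealEstimates

open scoped Nat

lemma add_pow_succ_le {c x : ℝ} (hc : 0 ≤ c) (hx : 1 ≤ x) (t : ℕ) :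
    (x + c) ^ (t + 1) ≤ x ^ (t + 1) + ((1 + c) ^ (t + 1) - 1) * x ^ t := by
  induction t with
  | zero => simp
  | succ t ih =>
    have hD : 0 ≤ (1 + c) ^ (t + 1) - 1 := by
      rw [sub_nonneg]
      exact one_le_pow₀ (by linarith)
    calc (x + c) ^ (t + 1 + 1) = (x + c) ^ (t + 1) * (x + c) := pow_succ _ _
      _ ≤ (x ^ (t + 1) + ((1 + c) ^ (t + 1) - 1) * x ^ t) * (x + c) := by gcongr
      _ = x ^ (t + 1 + 1) + ((1 + c) ^ (t + 1) - 1 + c) * x ^ (t + 1) +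
            ((1 + c) ^ (t + 1) - 1) * c * x ^ t := by ring
      _ ≤ x ^ (t + 1 + 1) + ((1 + c) ^ (t + 1) - 1 + c) * x ^ (t + 1) +
            ((1 + c) ^ (t + 1) - 1) * c * x ^ (t + 1) := by gcongr; omega
      _ = x ^ (t + 1 + 1) + ((1 + c) ^ (t + 1 + 1) - 1) * x ^ (t + 1) := by ring

lemma choose_add_le {x : ℕ} (hx : 1 ≤ x) (c t : ℕ) :
    ((x + c).choose (t + 1) : ℝ) ≤
      1 / (t + 1)! * (x : ℝ) ^ (t + 1) + ((1 + c : ℝ) ^ (t + 1) - 1) * (x : ℝ) ^ t := by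
  have hD : 0 ≤ (1 + c : ℝ) ^ (t + 1) - 1 := by
    rw [sub_nonneg]
    exact one_le_pow₀ (by linarith [c.cast_nonneg (α := ℝ)])
  have hfact : (1 : ℝ) ≤ (t + 1)! := mod_cast Nat.one_le_of_lt (Nat.factorial_pos _)
  calc ((x + c).choose (t + 1) : ℝ) ≤ ((x + c : ℕ) : ℝ) ^ (t + 1) / (t + 1)! :=
        Nat.choose_le_pow_div _ _
    _ ≤ ((x : ℝ) ^ (t + 1) + ((1 + c : ℝ) ^ (t + 1) - 1) * (x : ℝ) ^ t) / (t + 1)! := by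
        rw [Nat.cast_add]
        gcongr
        exact add_pow_succ_le c.cast_nonneg (mod_cast hx) t
    _ = 1 / (t + 1)! * (x : ℝ) ^ (t + 1) +
          ((1 + c : ℝ) ^ (t + 1) - 1) * (x : ℝ) ^ t / (t + 1)! := by ring
    _ ≤ 1 / (t + 1)! * (x : ℝ) ^ (t + 1) + ((1 + c : ℝ) ^ (t + 1) - 1) * (x : ℝ) ^ t := by
        gcongr
        exact div_le_self (by positivity) hfact

end RealEstimates

/-- For every fixed even `k ≥ 4`, with `t = (k−2)/2`, there is a constant
`C_k` such that for every `n ≥ 1`, `p_k(n) ≤ n·2^((1/t!)·α(n)^t + C_k·α(n)^(t−1))`. -/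
theorem pk_even_upper_bound :
    ∀ k : ℕ, 4 ≤ k → k % 2 = 0 → ∃ C : ℝ, ∀ n : ℕ, 1 ≤ n →
      (pFull k n : ℝ) ≤ (n : ℝ) * (2 : ℝ) ^
        ((1 / (Nat.factorial ((k - 2) / 2) : ℝ)) * (invAck n : ℝ) ^ ((k - 2) / 2)
          + C * (invAck n : ℝ) ^ ((k - 2) / 2 - 1)) := by
  intro k hk hk_even
  obtain ⟨t, rfl⟩ : ∃ t, k = 2 * t + 4 := ⟨(k - 4) / 2, by omega⟩
  obtain ⟨K, hK⟩ := exists_pFull_le_mul_thickness (2 * t + 3)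
  rw [show (2 * t + 4 - 2) / 2 = t + 1 by omega, Nat.add_sub_cancel]
  refine ⟨(1 + (5 * (t + 1) : ℕ) : ℝ) ^ (t + 1) - 1 + K, fun n _ => ?_⟩
  have invAck_ge : 1 ≤ invAck n := (invAck_spec n).1
  have pFull_le_pow : pFull (2 * t + 4) n ≤
      n * 2 ^ ((invAck n + 5 * (t + 1)).choose (t + 1) + K) := by
    refine (hK n).trans (Nat.mul_le_mul_left _ ?_)
    rw [pow_add]
    exact Nat.mul_le_mul (thickness_le_two_pow_choose t _) Nat.lt_two_pow_self.le
  calc (pFull (2 * t + 4) n : ℝ)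
      ≤ n * (2 : ℝ) ^ (((invAck n + 5 * (t + 1)).choose (t + 1) + K : ℕ) : ℝ) := by
        rw [Real.rpow_natCast]
        exact_mod_cast pFull_le_pow
    _ ≤ _ := by
        have choose_le := choose_add_le invAck_ge (5 * (t + 1)) t
        have K_le : (K : ℝ) ≤ K * (invAck n : ℝ) ^ t :=
          le_mul_of_one_le_right K.cast_nonneg (one_le_pow₀ (mod_cast invAck_ge))
        gcongr
        · exact one_le_two
        · rw [Nat.cast_add]
          linarith
end
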